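/- arXiv:2604.03352 — 8 statements merged into one kernel-verified Lean document; each statement's English description precedes it below -/
import Mathlib

section
/- Let K be a Markov kernel on a measurable space X that is reversible with respect to a probability measure π and has absolute spectral gap γ ∈ (0,1]. Let μ be a probability measure on X that is absolutely continuous with respect to π and whose density dμ/dπ lies in L²(π). Then for every integer p ≥ 0, χ²(μK^p ∣ π) ≤ (1−γ)^{2p} · χ²(μ ∣ π). -/
open MeasureTheory

/-- `μ K^p` : p-fold action of the kernel `K` on the measure `μ`. -/
noncomputable def iterBind {X : Type*} [MeasurableSpace X] (K : X → Measure X) :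
    ℕ → Measure X → Measure X
  | 0, μ => μ
  | p + 1, μ => (iterBind K p μ).bind K

/-- Reversibility of the kernel `K` with respect to `π`:
`π(dx)K(x,dy) = π(dy)K(y,dx)` as measures on `X × X`. -/
def Reversible {X : Type*} [MeasurableSpace X] (K : X → Measure X) (π : Measure X) : Prop :=
  ∀ A B : Set X, MeasurableSet A → MeasurableSet B →
    ∫⁻ x in A, K x B ∂π = ∫⁻ x in B, K x A ∂π

/-- `K` has absolute spectral gap `γ`: for every zero-mean `h ∈ L²(π)`,
`‖Kh‖_{L²(π)} ≤ (1-γ)‖h‖_{L²(π)}` (stated with squared norms). -/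
def HasAbsSpectralGap {X : Type*} [MeasurableSpace X] (K : X → Measure X) (π : Measure X)
    (γ : ℝ) : Prop :=
  ∀ h : X → ℝ, MemLp h 2 π → ∫ x, h x ∂π = 0 →
    ∫ x, (∫ y, h y ∂(K x)) ^ 2 ∂π ≤ (1 - γ) ^ 2 * ∫ x, (h x) ^ 2 ∂π

/-- `χ²(μ ∣ π) = ∫ (dμ/dπ − 1)² dπ`. -/
noncomputable def chiSq {X : Type*} [MeasurableSpace X] (μ π : Measure X) : ℝ :=
  ∫ x, ((μ.rnDeriv π x).toReal - 1) ^ 2 ∂π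

theorem bind_withDensity_aux {X : Type*} [MeasurableSpace X] (K : X → Measure X) (π : Measure X)
    (hKmeas : Measurable K) (hrev : Reversible K π) (f : X → ENNReal) (hf : Measurable f) :
    (π.withDensity f).bind K = π.withDensity (fun x => ∫⁻ y, f y ∂(K x)) := by
  have hKB : ∀ B, MeasurableSet B → Measurable (fun x => K x B) := fun B hB =>
    (Measure.measurable_coe hB).comp hKmeas
  ext B hB
  rw [Measure.bind_apply hB hKmeas.aemeasurable, withDensity_apply _ hB,
    lintegral_withDensity_eq_lintegral_mul _ hf (hKB B hB)]
  simp only [Pi.mul_apply]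
  refine Measurable.ennreal_induction (motive := fun f => ∫⁻ x, f x * K x B ∂π =
    ∫⁻ x in B, ∫⁻ y, f y ∂(K x) ∂π) ?_ ?_ ?_ hf
  · intro c A hA
    have h1 : ∀ x, A.indicator (fun _ => c) x * K x B = A.indicator (fun x => c * K x B) x := by
      intro x
      by_cases hx : x ∈ A <;> simp [hx]
    simp only [h1, lintegral_indicator hA, lintegral_const, Measure.restrict_apply_univ]
    rw [lintegral_const_mul _ (hKB B hB), lintegral_const_mul _ (hKB A hA), hrev A B hA hB]
  · intro f g _ hf hg h1 h2
    have e : ∀ x, ∫⁻ y, (f + g) y ∂(K x) = ∫⁻ y, f y ∂(K x) + ∫⁻ y, g y ∂(K x) := fun x => by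
      simp only [Pi.add_apply]
      rw [lintegral_add_left hf]
    have m1 : Measurable (fun x => f x * K x B) := hf.mul (hKB B hB)
    have m2 : Measurable (fun x => ∫⁻ y, f y ∂(K x)) :=
      (Measure.measurable_lintegral hf).comp hKmeas
    simp only [e]
    simp only [Pi.add_apply, add_mul]
    rw [lintegral_add_left m1, lintegral_add_left m2, h1, h2]
  · intro f hf hmono ih
    have e : ∀ x, ∫⁻ y, (⨆ n, f n y) ∂(K x) = ⨆ n, ∫⁻ y, f n y ∂(K x) := fun x =>
      lintegral_iSup hf hmono
    simp only [e, ENNReal.iSup_mul]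
    have m1 : ∀ n, Measurable (fun x => f n x * K x B) := fun n => (hf n).mul (hKB B hB)
    have m2 : ∀ n, Measurable (fun x => ∫⁻ y, f n y ∂(K x)) := fun n =>
      (Measure.measurable_lintegral (hf n)).comp hKmeas
    rw [lintegral_iSup m1, lintegral_iSup m2]
    · simp only [ih]
    · intro i j hij x
      exact lintegral_mono (hmono hij)
    · intro i j hij x
      exact mul_le_mul_left (hmono hij x) _

theorem step_aux {X : Type*} [MeasurableSpace X] (K : X → Measure X) (π μ : Measure X)
    (hK : ∀ x, IsProbabilityMeasure (K x)) (hKmeas : Measurable K)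
    [IsProbabilityMeasure π] [IsProbabilityMeasure μ]
    (γ : ℝ) (hrev : Reversible K π) (hgap : HasAbsSpectralGap K π γ)
    (hac : μ ≪ π) (hL2 : MemLp (fun x => (μ.rnDeriv π x).toReal) 2 π) :
    IsProbabilityMeasure (μ.bind K) ∧ μ.bind K ≪ π ∧
    MemLp (fun x => ((μ.bind K).rnDeriv π x).toReal) 2 π ∧
    chiSq (μ.bind K) π ≤ (1 - γ) ^ 2 * chiSq μ π := by
  have hprob : IsProbabilityMeasure (μ.bind K) := by
    constructor
    rw [Measure.bind_apply MeasurableSet.univ hKmeas.aemeasurable]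
    simp
  have hinv : π.bind K = π := by
    have := bind_withDensity_aux K π hKmeas hrev 1 measurable_one
    simpa [withDensity_one] using this
  set f := μ.rnDeriv π with hfdef
  have hf : Measurable f := Measure.measurable_rnDeriv μ π
  have hμ : π.withDensity f = μ := Measure.withDensity_rnDeriv_eq μ π hac
  have hKf : Measurable (fun x => ∫⁻ y, f y ∂(K x)) :=
    (Measure.measurable_lintegral hf).comp hKmeas
  have hb : μ.bind K = π.withDensity (fun x => ∫⁻ y, f y ∂(K x)) := by
    rw [← bind_withDensity_aux K π hKmeas hrev f hf, hμ]
  have hacK : μ.bind K ≪ π := by rw [hb]; exact withDensity_absolutelyContinuous _ _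
  have hrn : (μ.bind K).rnDeriv π =ᵐ[π] fun x => ∫⁻ y, f y ∂(K x) := by
    rw [hb]; exact Measure.rnDeriv_withDensity π hKf
  have hfin : ∀ᵐ x ∂π, ∫⁻ y, f y ∂(K x) < ⊤ := by
    filter_upwards [hrn, Measure.rnDeriv_lt_top (μ.bind K) π] with x h1 h2
    rwa [← h1]
  have hgint : ∀ᵐ x ∂π, Integrable (fun y => (f y).toReal) (K x) ∧
      ((μ.bind K).rnDeriv π x).toReal = ∫ y, (f y).toReal ∂(K x) := by
    filter_upwards [hfin, hrn] with x h1 h2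
    refine ⟨integrable_toReal_of_lintegral_ne_top hf.aemeasurable h1.ne, ?_⟩
    rw [h2, integral_toReal hf.aemeasurable (ae_lt_top hf h1.ne)]
  have hmean : ∫ x, (f x).toReal ∂π = 1 := by
    rw [Measure.integral_toReal_rnDeriv hac]; simp
  have hgi : Integrable (fun x => (f x).toReal) π := Measure.integrable_toReal_rnDeriv
  have hgm : Measurable (fun x => (f x).toReal) := hf.ennreal_toReal
  refine ⟨hprob, hacK, ?_, ?_⟩
  · refine ⟨(Measure.measurable_rnDeriv _ _).ennreal_toReal.aestronglyMeasurable, ?_⟩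
    have hlt := lintegral_rpow_enorm_lt_top_of_eLpNorm_lt_top (p := 2) (by simp) (by simp) hL2.2
    rw [eLpNorm_lt_top_iff_lintegral_rpow_enorm_lt_top (by simp) (by simp)]
    refine lt_of_le_of_lt ?_ hlt
    have hm2 : Measurable (fun x => ‖(f x).toReal‖ₑ ^ (2 : ENNReal).toReal) :=
      hgm.enorm.pow_const _
    conv_rhs => rw [← hinv]
    rw [Measure.lintegral_bind hKmeas.aemeasurable hm2.aemeasurable]
    refine lintegral_mono_ae ?_
    filter_upwards [hgint] with x hx
    rw [hx.2]
    have h1 : ‖∫ y, (f y).toReal ∂(K x)‖ₑ ≤ eLpNorm (fun y => (f y).toReal) 2 (K x) := by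
      refine (enorm_integral_le_lintegral_enorm _).trans ?_
      rw [← eLpNorm_one_eq_lintegral_enorm]
      exact eLpNorm_le_eLpNorm_of_exponent_le (by norm_num) hgm.aestronglyMeasurable
    refine (ENNReal.rpow_le_rpow h1 (by simp)).trans ?_
    rw [eLpNorm_eq_lintegral_rpow_enorm_toReal (by simp) (by simp), ← ENNReal.rpow_mul]
    simp
  · have h := hgap (fun x => (f x).toReal - 1) (hL2.sub (memLp_const 1)) (by
      rw [integral_sub hgi (integrable_const _), hmean]; simp)
    refine le_trans (le_of_eq ?_) h
    unfold chiSq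
    refine integral_congr_ae ?_
    filter_upwards [hgint] with x hx
    rw [hx.2, integral_sub hx.1 (integrable_const _)]
    simp

theorem stmt0 {X : Type*} [MeasurableSpace X] (K : X → Measure X) (π μ : Measure X)
    (hK : ∀ x, IsProbabilityMeasure (K x)) (hKmeas : Measurable K)
    [IsProbabilityMeasure π] [IsProbabilityMeasure μ]
    (γ : ℝ) (hγ : γ ∈ Set.Ioc (0 : ℝ) 1)
    (hrev : Reversible K π) (hgap : HasAbsSpectralGap K π γ)
    (hac : μ ≪ π) (hL2 : MemLp (fun x => (μ.rnDeriv π x).toReal) 2 π) :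
    ∀ p : ℕ, chiSq (iterBind K p μ) π ≤ (1 - γ) ^ (2 * p) * chiSq μ π := by
  have key : ∀ p : ℕ, IsProbabilityMeasure (iterBind K p μ) ∧ iterBind K p μ ≪ π ∧
      MemLp (fun x => ((iterBind K p μ).rnDeriv π x).toReal) 2 π ∧
      chiSq (iterBind K p μ) π ≤ (1 - γ) ^ (2 * p) * chiSq μ π := by
    intro p
    induction p with
    | zero => exact ⟨inferInstanceAs (IsProbabilityMeasure μ), hac, hL2, by simp [iterBind]⟩
    | succ p ih =>
      obtain ⟨h1, h2, h3, h4⟩ := ih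
      obtain ⟨a, b, c, d⟩ := step_aux K π (iterBind K p μ) hK hKmeas γ hrev hgap h2 h3
      refine ⟨a, b, c, d.trans ?_⟩
      calc (1 - γ) ^ 2 * chiSq (iterBind K p μ) π
          ≤ (1 - γ) ^ 2 * ((1 - γ) ^ (2 * p) * chiSq μ π) :=
            mul_le_mul_of_nonneg_left h4 (sq_nonneg _)
        _ = _ := by ring
  exact fun p => (key p).2.2.2
end

section
/- Let K be a Markov kernel on a measurable space X that is reversible with respect to a probability measure π and has absolute spectral gap γ ∈ (0,1]. Let ω ≥ 1, let μ be a probability measure that is ω-warm with respect to π, and let ξ be a real with 0 < ξ ≤ ω. Then every integer p with p ≥ log(ω/ξ)/γ satisfies TV(μK^p ∣ π) ≤ ξ. -/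
open MeasureTheory

/-- `μ` is `ω`-warm with respect to `π`: `μ(A) ≤ ω π(A)` for all measurable `A`. -/
def IsWarm {X : Type*} [MeasurableSpace X] (μ π : Measure X) (ω : ℝ) : Prop :=
  ∀ A : Set X, MeasurableSet A → μ A ≤ ENNReal.ofReal ω * π A

lemma aux_integral_bind {X : Type*} [MeasurableSpace X] (K : X → Measure X) (m : Measure X)
    (hK : ∀ x, IsProbabilityMeasure (K x)) (hKmeas : Measurable K) [IsProbabilityMeasure m]
    (h : X → ℝ) (hm : Measurable h) (hb : ∀ x, |h x| ≤ 1) :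
    ∫ y, h y ∂(m.bind K) = ∫ x, (∫ y, h y ∂(K x)) ∂m := by
  let κ : ProbabilityTheory.Kernel X X := ⟨K, hKmeas⟩
  have e : (ProbabilityTheory.Kernel.comp κ (ProbabilityTheory.Kernel.const Unit m)) () =
      m.bind K := by
    rw [ProbabilityTheory.Kernel.comp_apply]
    rfl
  have : IsProbabilityMeasure (m.bind K) :=
    isProbabilityMeasure_bind hKmeas.aemeasurable (Filter.Eventually.of_forall hK)
  have hi : Integrable h (m.bind K) :=
    Integrable.of_bound hm.aestronglyMeasurable 1 (Filter.Eventually.of_forall hb)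
  rw [← e] at hi ⊢
  exact ProbabilityTheory.Kernel.integral_comp hi

lemma aux_iter_prob {X : Type*} [MeasurableSpace X] (K : X → Measure X) (m : Measure X)
    (hK : ∀ x, IsProbabilityMeasure (K x)) (hKmeas : Measurable K) [IsProbabilityMeasure m]
    (p : ℕ) : IsProbabilityMeasure (iterBind K p m) := by
  induction p with
  | zero => simpa [iterBind]
  | succ p ih =>
    exact isProbabilityMeasure_bind hKmeas.aemeasurable (Filter.Eventually.of_forall hK)

lemma aux_bind_inv {X : Type*} [MeasurableSpace X] (K : X → Measure X) (π : Measure X)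
    (hK : ∀ x, IsProbabilityMeasure (K x)) (hKmeas : Measurable K)
    (hrev : Reversible K π) : π.bind K = π := by
  ext B hB
  rw [Measure.bind_apply hB hKmeas.aemeasurable]
  have := hrev Set.univ B MeasurableSet.univ hB
  simpa using this

lemma aux_main {X : Type*} [MeasurableSpace X] (K : X → Measure X) (π μ : Measure X)
    (hK : ∀ x, IsProbabilityMeasure (K x)) (hKmeas : Measurable K)
    [IsProbabilityMeasure π] [IsProbabilityMeasure μ]
    (γ : ℝ) (hγ : γ ∈ Set.Ioc (0 : ℝ) 1)
    (hrev : Reversible K π) (hgap : HasAbsSpectralGap K π γ)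
    (ω : ℝ) (hω : 1 ≤ ω) (hwarm : IsWarm μ π ω) (p : ℕ) :
    ∀ h : X → ℝ, Measurable h → (∀ x, |h x| ≤ 1) → ∫ x, h x ∂π = 0 →
      |∫ x, h x ∂(iterBind K p μ)| ≤ ω * (1 - γ) ^ p * Real.sqrt (∫ x, (h x) ^ 2 ∂π) := by
  induction p with
  | zero =>
    intro h hm hb h0
    have hL : MemLp h 2 π :=
      MemLp.of_bound hm.aestronglyMeasurable 1 (Filter.Eventually.of_forall hb)
    have hle : μ ≤ ENNReal.ofReal ω • π := by
      rw [Measure.le_iff]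
      intro s hs
      simpa using hwarm s hs
    have hi : Integrable (fun x => |h x|) π := (hL.integrable (by norm_num)).abs
    have h1 : ∫ x, |h x| ∂μ ≤ ω * ∫ x, |h x| ∂π := by
      have := integral_mono_measure hle (Filter.Eventually.of_forall fun x => abs_nonneg (h x))
        (hi.smul_measure ENNReal.ofReal_ne_top)
      rw [integral_smul_measure, ENNReal.toReal_ofReal (by linarith)] at this
      exact this
    have h2 : ∫ x, |h x| ∂π ≤ Real.sqrt (∫ x, (h x) ^ 2 ∂π) := by
      apply Real.le_sqrt_of_sq_le
      have hv := ProbabilityTheory.variance_nonneg (fun x => |h x|) π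
      rw [ProbabilityTheory.variance_eq_sub (show MemLp (fun x => |h x|) 2 π from hL.abs)] at hv
      simp only [Pi.pow_apply, sq_abs] at hv
      linarith
    have h3 : |∫ x, h x ∂μ| ≤ ∫ x, |h x| ∂μ := abs_integral_le_integral_abs
    simp only [iterBind, pow_zero, mul_one]
    calc _ ≤ _ := h3
      _ ≤ _ := h1
      _ ≤ _ := by gcongr
  | succ p ih =>
    intro h hm hb h0
    have := aux_iter_prob K μ hK hKmeas p
    have hL : MemLp h 2 π :=
      MemLp.of_bound hm.aestronglyMeasurable 1 (Filter.Eventually.of_forall hb)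
    have hTm : Measurable fun x => ∫ y, h y ∂(K x) :=
      (StronglyMeasurable.integral_kernel (κ := (⟨K, hKmeas⟩ : ProbabilityTheory.Kernel X X))
        hm.stronglyMeasurable).measurable
    have hTb : ∀ x, |∫ y, h y ∂(K x)| ≤ 1 := by
      intro x
      have := hK x
      have := norm_integral_le_of_norm_le_const (μ := K x) (f := h) (C := 1)
        (Filter.Eventually.of_forall hb)
      simpa using this
    have hT0 : ∫ x, (∫ y, h y ∂(K x)) ∂π = 0 := by
      rw [← aux_integral_bind K π hK hKmeas h hm hb, aux_bind_inv K π hK hKmeas hrev, h0]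
    have key := ih _ hTm hTb hT0
    rw [← aux_integral_bind K _ hK hKmeas h hm hb] at key
    have hg : 0 ≤ 1 - γ := by linarith [hγ.2]
    have hs : Real.sqrt (∫ x, (∫ y, h y ∂(K x)) ^ 2 ∂π) ≤
        (1 - γ) * Real.sqrt (∫ x, (h x) ^ 2 ∂π) := by
      refine (Real.sqrt_le_sqrt (hgap h hL h0)).trans ?_
      rw [Real.sqrt_mul (sq_nonneg _), Real.sqrt_sq hg]
    calc _ ≤ _ := key
      _ ≤ ω * (1 - γ) ^ p * ((1 - γ) * Real.sqrt (∫ x, (h x) ^ 2 ∂π)) := by gcongr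
      _ = _ := by ring

theorem stmt2 {X : Type*} [MeasurableSpace X] (K : X → Measure X) (π μ : Measure X)
    (hK : ∀ x, IsProbabilityMeasure (K x)) (hKmeas : Measurable K)
    [IsProbabilityMeasure π] [IsProbabilityMeasure μ]
    (γ : ℝ) (hγ : γ ∈ Set.Ioc (0 : ℝ) 1)
    (hrev : Reversible K π) (hgap : HasAbsSpectralGap K π γ)
    (ω : ℝ) (hω : 1 ≤ ω) (hwarm : IsWarm μ π ω)
    (ξ : ℝ) (hξ : 0 < ξ) (hξω : ξ ≤ ω) :
    ∀ p : ℕ, Real.log (ω / ξ) / γ ≤ (p : ℝ) →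
      ∀ A : Set X, MeasurableSet A →
        |((iterBind K p μ) A).toReal - (π A).toReal| ≤ ξ := by
  intro p hp A hA
  have hprob := aux_iter_prob K μ hK hKmeas p
  have hA0 : 0 ≤ π.real A := measureReal_nonneg
  have hA1 : π.real A ≤ 1 := measureReal_le_one
  let h : X → ℝ := fun x => A.indicator (fun _ => (1 : ℝ)) x - π.real A
  have hm : Measurable h := (measurable_const.indicator hA).sub measurable_const
  have hb : ∀ x, |h x| ≤ 1 := by
    intro x
    by_cases hx : x ∈ A <;> simp only [h, hx, Set.indicator_of_mem, Set.indicator_of_notMem,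
      not_false_eq_true] <;> rw [abs_le] <;> constructor <;> linarith
  have hint : ∀ ν : Measure X, IsProbabilityMeasure ν →
      ∫ x, h x ∂ν = ν.real A - π.real A := by
    intro ν hν
    rw [integral_sub ((integrable_const _).indicator hA) (integrable_const _)]
    simp [integral_indicator hA]
  have h0 : ∫ x, h x ∂π = 0 := by rw [hint π inferInstance, sub_self]
  have key := aux_main K π μ hK hKmeas γ hγ hrev hgap ω hω hwarm p h hm hb h0
  rw [hint _ hprob] at key
  have hs : Real.sqrt (∫ x, (h x) ^ 2 ∂π) ≤ 1 := by
    rw [Real.sqrt_le_iff, one_pow]; refine ⟨zero_le_one, ?_⟩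
    have := norm_integral_le_of_norm_le_const (μ := π) (f := fun x => (h x) ^ 2) (C := 1)
      (Filter.Eventually.of_forall fun x => by
        rw [Real.norm_eq_abs, abs_pow]
        exact pow_le_one₀ (abs_nonneg _) (hb x))
    simp only [probReal_univ, mul_one] at this
    exact (le_abs_self _).trans this
  have hg : 0 ≤ 1 - γ := by linarith [hγ.2]
  have hω0 : 0 < ω := by linarith
  have he : (1 - γ) ^ p ≤ ξ / ω := by
    calc (1 - γ) ^ p ≤ (Real.exp (-γ)) ^ p := by
          gcongr
          linarith [Real.add_one_le_exp (-γ)]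
      _ = Real.exp (p * (-γ)) := by rw [Real.exp_nat_mul]
      _ ≤ Real.exp (Real.log (ξ / ω)) := by
          apply Real.exp_le_exp.2
          rw [div_le_iff₀ hγ.1] at hp
          have : Real.log (ξ / ω) = - Real.log (ω / ξ) := by
            rw [← Real.log_inv, inv_div]
          linarith
      _ = ξ / ω := Real.exp_log (by positivity)
  calc _ ≤ _ := key
    _ ≤ ω * (ξ / ω) * 1 := by gcongr
    _ = ξ := by field_simp
end

section
/- Let d ≥ 1, α > 0, and let W : ℝ^d → ℝ be a C¹ function such that x ↦ W(x) − (α/2)‖x‖² is convex and exp(−W) is Lebesgue integrable; let π be the probability measure on ℝ^d with density proportional to exp(−W). Let x* ∈ ℝ^d and set m = (∫ x dπ(x)) − x*. Then for every t with 0 ≤ t < α/2, ∫ exp(t‖x − x*‖²) dπ(x) ≤ (1 − 2t/α)^{−d/2} · exp( 2‖m‖²·t / (1 − 2t/α) ). -/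
open MeasureTheory

/-- The probability measure on `ℝ^d` with density proportional to `exp(−W)`. -/
noncomputable def gibbsMeasure (d : ℕ) (W : EuclideanSpace ℝ (Fin d) → ℝ) :
    Measure (EuclideanSpace ℝ (Fin d)) :=
  ((volume.withDensity (fun x => ENNReal.ofReal (Real.exp (-W x)))) Set.univ)⁻¹ •
    volume.withDensity (fun x => ENNReal.ofReal (Real.exp (-W x)))

theorem bm_compact (K L : Set ℝ) (hK : IsCompact K) (hL : IsCompact L) (hKn : K.Nonempty)
    (hLn : L.Nonempty) (C : Set ℝ)
    (hC : ∀ x ∈ K, ∀ y ∈ L, x + y ∈ C) : volume K + volume L ≤ volume C := by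
  obtain ⟨a, ha, hamax⟩ := hK.exists_isMaxOn hKn continuousOn_id
  obtain ⟨b, hb, hbmin⟩ := hL.exists_isMinOn hLn continuousOn_id
  have h1 : ∀ x ∈ K, x ≤ a := fun x hx => hamax hx
  have h2 : ∀ x ∈ L, b ≤ x := fun x hx => hbmin hx
  have e1 : volume ((fun x => x + b) '' K) = volume K := by
    simp
  have e2 : volume ((fun x => a + x) '' L) = volume L := by
    simp
  have hm : MeasurableSet ((fun x => a + x) '' L) :=
    (hL.image (by fun_prop)).measurableSet
  have hd : AEDisjoint volume ((fun x => x + b) '' K) ((fun x => a + x) '' L) := by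
    refine measure_mono_null (t := {a + b}) ?_ (by simp)
    rintro z ⟨⟨x, hx, rfl⟩, ⟨y, hy, hxy⟩⟩
    have := h1 x hx
    have := h2 y hy
    simp only [Set.mem_singleton_iff] at *
    linarith
  rw [← e1, ← e2, ← measure_union₀ hm.nullMeasurableSet hd]
  apply measure_mono
  rintro z (⟨x, hx, rfl⟩ | ⟨y, hy, rfl⟩)
  · exact hC x hx b hb
  · exact hC a ha y hy

theorem bm_one (A B : Set ℝ) (hA : MeasurableSet A) (hB : MeasurableSet B) (hAn : A.Nonempty)
    (hBn : B.Nonempty) (C : Set ℝ)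
    (hC : ∀ x ∈ A, ∀ y ∈ B, x + y ∈ C) : volume A + volume B ≤ volume C := by
  obtain ⟨a, ha⟩ := hAn
  obtain ⟨b, hb⟩ := hBn
  rw [hA.measure_eq_iSup_isCompact, hB.measure_eq_iSup_isCompact]
  have key : ∀ K : Set ℝ, K ⊆ A → IsCompact K → ∀ L : Set ℝ, L ⊆ B → IsCompact L →
      volume K + volume L ≤ volume C := by
    intro K hKA hK L hLB hL
    refine le_trans (add_le_add (measure_mono (Set.subset_insert a K))
      (measure_mono (Set.subset_insert b L))) ?_
    refine bm_compact _ _ (hK.insert a) (hL.insert b) (Set.insert_nonempty _ _)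
      (Set.insert_nonempty _ _) C ?_
    intro x hx y hy
    exact hC x (Set.insert_subset ha hKA hx) y (Set.insert_subset hb hLB hy)
  simp only [iSup_and']
  exact ENNReal.biSup_add_biSup_le' ⟨∅, by simp⟩ ⟨∅, by simp⟩
    fun K hK L hL => key K hK.1 hK.2 L hL.1 hL.2

theorem ennreal_amgm (p q : ℝ) (hp : 0 < p) (hq : 0 < q) (hpq : p + q = 1) (x y : ENNReal) :
    x ^ p * y ^ q ≤ ENNReal.ofReal p * x + ENNReal.ofReal q * y := by
  induction x with
  | top => 
    rw [ENNReal.mul_top (by simpa using hp)]; simp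
  | coe x =>
    induction y with
    | top => rw [ENNReal.mul_top (by simpa using hq)]; simp
    | coe y =>
      have := NNReal.geom_mean_le_arith_mean2_weighted p.toNNReal q.toNNReal x y (by
        rw [← Real.toNNReal_add hp.le hq.le, hpq]; simp)
      rw [Real.coe_toNNReal _ hp.le, Real.coe_toNNReal _ hq.le] at this
      rw [← ENNReal.coe_rpow_of_nonneg _ hp.le, ← ENNReal.coe_rpow_of_nonneg _ hq.le]
      rw [ENNReal.ofReal, ENNReal.ofReal]
      exact_mod_cast this

theorem pl_norm (p q : ℝ) (hp : 0 < p) (hq : 0 < q) (hpq : p + q = 1)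
    (f g h : ℝ → ℝ) (hf : Measurable f) (hg : Measurable g) (hh : Measurable h)
    (f0 : ∀ x, 0 ≤ f x) (g0 : ∀ x, 0 ≤ g x) (h0 : ∀ x, 0 ≤ h x)
    (f1 : ∀ x, f x ≤ 1) (g1 : ∀ x, g x ≤ 1)
    (fs : ∀ s < 1, ∃ x, s < f x) (gs : ∀ s < 1, ∃ x, s < g x)
    (H : ∀ x y, f x ^ p * g y ^ q ≤ h (p * x + q * y)) :
    ENNReal.ofReal p * (∫⁻ x, ENNReal.ofReal (f x)) + ENNReal.ofReal q * ∫⁻ x, ENNReal.ofReal (g x)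
      ≤ ∫⁻ x, ENNReal.ofReal (h x) := by
  rw [lintegral_eq_lintegral_meas_lt _ (.of_forall f0) hf.aemeasurable,
    lintegral_eq_lintegral_meas_lt _ (.of_forall g0) hg.aemeasurable,
    lintegral_eq_lintegral_meas_lt _ (.of_forall h0) hh.aemeasurable]
  rw [← lintegral_const_mul' _ _ (by simp), ← lintegral_const_mul' _ _ (by simp)]
  have mf : Measurable fun t : ℝ => ENNReal.ofReal p * volume {a | t < f a} := by
    apply Measurable.const_mul
    apply Antitone.measurable
    intro s t hst
    exact measure_mono fun x hx => lt_of_le_of_lt hst hx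
  rw [← lintegral_add_left mf]
  apply setLIntegral_mono' measurableSet_Ioi
  intro s hs
  have hs : 0 < s := hs
  rcases le_or_gt 1 s with h1 | h1
  · have e1 : {a | s < f a} = ∅ := by
      ext x; simpa using (f1 x).trans h1
    have e2 : {a | s < g a} = ∅ := by
      ext x; simpa using (g1 x).trans h1
    simp [e1, e2]
  · have e1 : ENNReal.ofReal p * volume {a | s < f a} = volume ((fun x => p * x) '' {a | s < f a}) := by
      have := Measure.addHaar_image_homothety (volume : Measure ℝ) 0 p {a | s < f a}
      have h' : (AffineMap.homothety (0:ℝ) p : ℝ → ℝ) = fun x => p * x := by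
        ext x; simp [AffineMap.homothety_apply]
      rw [h'] at this
      rw [this]; simp [abs_of_pos hp]
    have e2 : ENNReal.ofReal q * volume {a | s < g a} = volume ((fun x => q * x) '' {a | s < g a}) := by
      have := Measure.addHaar_image_homothety (volume : Measure ℝ) 0 q {a | s < g a}
      have h' : (AffineMap.homothety (0:ℝ) q : ℝ → ℝ) = fun x => q * x := by
        ext x; simp [AffineMap.homothety_apply]
      rw [h'] at this
      rw [this]; simp [abs_of_pos hq]
    rw [e1, e2]
    apply bm_one
    · exact (Homeomorph.mulLeft₀ p hp.ne').measurableEmbedding.measurableSet_image.2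
        (measurableSet_lt measurable_const hf)
    · exact (Homeomorph.mulLeft₀ q hq.ne').measurableEmbedding.measurableSet_image.2
        (measurableSet_lt measurable_const hg)
    · exact Set.Nonempty.image _ (fs s h1)
    · exact Set.Nonempty.image _ (gs s h1)
    · rintro _ ⟨x, hx, rfl⟩ _ ⟨y, hy, rfl⟩
      refine lt_of_lt_of_le ?_ (H x y)
      have hx : s < f x := hx
      have hy : s < g y := hy
      calc s = s ^ p * s ^ q := by rw [← Real.rpow_add hs, hpq, Real.rpow_one]
        _ < _ := mul_lt_mul'' (Real.rpow_lt_rpow hs.le hx hp) (Real.rpow_lt_rpow hs.le hy hq)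
          (by positivity) (by positivity)

theorem pl_bdd (p q : ℝ) (hp : 0 < p) (hq : 0 < q) (hpq : p + q = 1)
    (f g : ℝ → ℝ) (h : ℝ → ENNReal) (hf : Measurable f) (hg : Measurable g) (hh : Measurable h)
    (f0 : ∀ x, 0 ≤ f x) (g0 : ∀ x, 0 ≤ g x) 
    (fb : BddAbove (Set.range f)) (gb : BddAbove (Set.range g))
    (H : ∀ x y, ENNReal.ofReal (f x ^ p * g y ^ q) ≤ h (p * x + q * y)) :
    (∫⁻ x, ENNReal.ofReal (f x)) ^ p * (∫⁻ x, ENNReal.ofReal (g x)) ^ q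
      ≤ ∫⁻ x, h x := by
  set a := ⨆ x, f x with ha
  set b := ⨆ x, g x with hb
  have fa : ∀ x, f x ≤ a := fun x => le_ciSup fb x
  have gb' : ∀ x, g x ≤ b := fun x => le_ciSup gb x
  rcases (le_trans (f0 0) (fa 0)).eq_or_lt with h | apos
  · have : ∀ x, f x = 0 := fun x => le_antisymm (h ▸ fa x) (f0 x)
    simp [this, hp]
  rcases (le_trans (g0 0) (gb' 0)).eq_or_lt with h | bpos
  · have : ∀ x, g x = 0 := fun x => le_antisymm (h ▸ gb' x) (g0 x)
    simp [this, hq]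
  set c := a ^ p * b ^ q with hc
  have cpos : 0 < c := by positivity
  have key := pl_norm p q hp hq hpq (fun x => f x / a) (fun x => g x / b)
    (fun x => (min (h x) (ENNReal.ofReal c)).toReal / c) (by fun_prop) (by fun_prop) (by fun_prop)
    (fun x => div_nonneg (f0 x) apos.le) (fun x => div_nonneg (g0 x) bpos.le)
    (fun x => by positivity) (fun x => (div_le_one apos).2 (fa x))
    (fun x => (div_le_one bpos).2 (gb' x))
    (fun s hs => by
      obtain ⟨x, hx⟩ := exists_lt_of_lt_ciSup (show s * a < ⨆ x, f x by rw [← ha]; nlinarith)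
      exact ⟨x, (lt_div_iff₀ apos).2 hx⟩)
    (fun s hs => by
      obtain ⟨x, hx⟩ := exists_lt_of_lt_ciSup (show s * b < ⨆ x, g x by rw [← hb]; nlinarith)
      exact ⟨x, (lt_div_iff₀ bpos).2 hx⟩)
    (fun x y => by
      have e : (f x / a) ^ p * (g y / b) ^ q = (f x ^ p * g y ^ q) / c := by
        rw [Real.div_rpow (f0 x) apos.le, Real.div_rpow (g0 y) bpos.le, hc]; field_simp
      rw [e]
      gcongr
      rw [← ENNReal.ofReal_le_iff_le_toReal (by simp)]
      refine le_min (H x y) (ENNReal.ofReal_le_ofReal ?_)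
      have h1 := f0 x
      have h2 := g0 y
      have h3 := fa x
      have h4 := gb' y
      rw [hc]
      gcongr)
  have e1 : ∫⁻ x, ENNReal.ofReal (f x) = ENNReal.ofReal a * ∫⁻ x, ENNReal.ofReal (f x / a) := by
    rw [← lintegral_const_mul' _ _ (by simp)]
    congr with x
    rw [← ENNReal.ofReal_mul apos.le]; congr 1; field_simp
  have e2 : ∫⁻ x, ENNReal.ofReal (g x) = ENNReal.ofReal b * ∫⁻ x, ENNReal.ofReal (g x / b) := by
    rw [← lintegral_const_mul' _ _ (by simp)]
    congr with x
    rw [← ENNReal.ofReal_mul bpos.le]; congr 1; field_simp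
  rw [e1, e2, ENNReal.mul_rpow_of_nonneg _ _ hp.le, ENNReal.mul_rpow_of_nonneg _ _ hq.le,
    mul_mul_mul_comm, ENNReal.ofReal_rpow_of_pos apos, ENNReal.ofReal_rpow_of_pos bpos,
    ← ENNReal.ofReal_mul (by positivity)]
  refine (mul_le_mul_right ((ennreal_amgm p q hp hq hpq _ _).trans key) _).trans ?_
  rw [← lintegral_const_mul' _ _ (by simp)]
  apply lintegral_mono
  intro x
  simp only
  rw [← ENNReal.ofReal_mul (by positivity)]
  rw [show a ^ p * b ^ q * ((min (h x) (ENNReal.ofReal c)).toReal / c) = (min (h x) (ENNReal.ofReal c)).toReal by rw [← hc]; field_simp]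
  rw [ENNReal.ofReal_toReal (by simp)]
  exact min_le_left _ _

theorem pl_one (p q : ℝ) (hp : 0 < p) (hq : 0 < q) (hpq : p + q = 1)
    (f g h : ℝ → ENNReal) (hf : Measurable f) (hg : Measurable g) (hh : Measurable h)
    (H : ∀ x y, f x ^ p * g y ^ q ≤ h (p * x + q * y)) :
    (∫⁻ x, f x) ^ p * (∫⁻ x, g x) ^ q ≤ ∫⁻ x, h x := by
  have mc : ∀ f : ℝ → ENNReal, Measurable f → 
      Filter.Tendsto (fun n : ℕ => ∫⁻ x, min (f x) n) Filter.atTop (nhds (∫⁻ x, f x)) := by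
    intro f hf
    apply lintegral_tendsto_of_tendsto_of_monotone
    · intro n; fun_prop
    · refine .of_forall fun x m n hmn => ?_
      simp only
      gcongr
    · refine .of_forall fun x => ?_
      have := (tendsto_const_nhds (x := f x)).min ENNReal.tendsto_nat_nhds_top
      simpa using this
  have b : ∀ n : ℕ, (∫⁻ x, min (f x) n) ^ p * (∫⁻ x, min (g x) n) ^ q ≤ ∫⁻ x, h x := by
    intro n
    have hb : ∀ f : ℝ → ENNReal, BddAbove (Set.range fun x => (min (f x) n).toReal) := by
      intro f
      refine ⟨n, ?_⟩
      rintro _ ⟨x, rfl⟩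
      simpa using ENNReal.toReal_mono (by simp) (min_le_right (f x) (n:ENNReal))
    have := pl_bdd p q hp hq hpq (fun x => (min (f x) n).toReal) (fun x => (min (g x) n).toReal) h
      (by fun_prop) (by fun_prop) hh (fun x => by positivity) (fun x => by positivity) (hb f) (hb g)
      (fun x y => by
        refine le_trans ?_ (H x y)
        rw [ENNReal.ofReal_mul (by positivity), ← ENNReal.ofReal_rpow_of_nonneg (by positivity) hp.le,
          ← ENNReal.ofReal_rpow_of_nonneg (by positivity) hq.le, ENNReal.ofReal_toReal (by simp),
          ENNReal.ofReal_toReal (by simp)]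
        gcongr <;> exact min_le_left _ _)
    refine le_trans (le_of_eq ?_) this
    congr 3 <;> ext x <;> rw [ENNReal.ofReal_toReal (by simp)]
  by_cases hF : ∫⁻ x, f x = 0
  · simp [hF, hp]
  by_cases hG : ∫⁻ x, g x = 0
  · simp [hG, hq]
  refine le_of_tendsto (ENNReal.Tendsto.mul ((mc f hf).ennrpow_const p) ?_ ((mc g hg).ennrpow_const q) ?_)
    (.of_forall b)
  · left; simp [hF, hp, hp.le]
  · left; simp [hG, hq, hq.le]

theorem pl_pi (p q : ℝ) (hp : 0 < p) (hq : 0 < q) (hpq : p + q = 1) (n : ℕ) :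
    ∀ (f g h : (Fin n → ℝ) → ENNReal) (hf : Measurable f) (hg : Measurable g) (hh : Measurable h)
    (H : ∀ x y, f x ^ p * g y ^ q ≤ h (p • x + q • y)),
    (∫⁻ x, f x) ^ p * (∫⁻ x, g x) ^ q ≤ ∫⁻ x, h x := by
  induction n with
  | zero =>
    intro f g h hf hg hh H
    have e : ∀ f : (Fin 0 → ℝ) → ENNReal, ∫⁻ x, f x = f 0 := by
      intro f
      rw [lintegral_unique]
      have h0 : ∀ x : Fin 0 → ℝ, f x = f 0 := fun x => by rw [Subsingleton.elim x 0]
      rw [h0]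
      simp [volume_pi]
    rw [e, e, e]
    simpa using H 0 0
  | succ n ih =>
    intro f g h hf hg hh H
    let e := MeasurableEquiv.piFinSuccAbove (fun _ : Fin (n+1) => ℝ) 0
    have me := (volume_preserving_piFinSuccAbove (fun _ : Fin (n+1) => ℝ) 0).symm
    have key : ∀ f : (Fin (n+1) → ℝ) → ENNReal, Measurable f →
        ∫⁻ x, f x = ∫⁻ s : ℝ, ∫⁻ x : Fin n → ℝ, f (e.symm (s, x)) := by
      intro f hf
      rw [← me.lintegral_comp hf]
      rw [Measure.volume_eq_prod, lintegral_prod _ (by fun_prop)]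
    have mk : ∀ f : (Fin (n+1) → ℝ) → ENNReal, Measurable f →
        Measurable fun s : ℝ => ∫⁻ x : Fin n → ℝ, f (e.symm (s, x)) := by
      intro f hf
      exact Measurable.lintegral_prod_right' (f := fun z => f (e.symm z)) (by fun_prop)
    rw [key f hf, key g hg, key h hh]
    refine pl_one p q hp hq hpq _ _ _ (mk f hf) (mk g hg) (mk h hh) ?_
    intro s u
    refine ih _ _ _ (by fun_prop) (by fun_prop) (by fun_prop) ?_
    intro x y
    refine (H _ _).trans (le_of_eq ?_)
    congr 1
    ext i
    refine Fin.cases ?_ (fun i => ?_) i <;> simp [e]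

theorem pl_eucl (p q : ℝ) (hp : 0 < p) (hq : 0 < q) (hpq : p + q = 1) (n : ℕ) 
    (f g h : EuclideanSpace ℝ (Fin n) → ENNReal) (hf : Measurable f) (hg : Measurable g) (hh : Measurable h)
    (H : ∀ x y, f x ^ p * g y ^ q ≤ h (p • x + q • y)) :
    (∫⁻ x, f x) ^ p * (∫⁻ x, g x) ^ q ≤ ∫⁻ x, h x := by
  have me := (EuclideanSpace.volume_preserving_symm_measurableEquiv_toLp (Fin n)).symm
  rw [← me.lintegral_comp hf, ← me.lintegral_comp hg, ← me.lintegral_comp hh]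
  refine pl_pi p q hp hq hpq n _ _ _ (by fun_prop) (by fun_prop) (by fun_prop) ?_
  intro x y
  refine (H _ _).trans (le_of_eq ?_)
  rfl

open scoped RealInnerProductSpace

theorem gauss_lint (d : ℕ) (b : ℝ) (hb : 0 < b) (c : ℝ) (w : EuclideanSpace ℝ (Fin d)) :
    ∫⁻ v : EuclideanSpace ℝ (Fin d), ENNReal.ofReal (Real.exp (-b * ‖v‖ ^ 2 + c * ⟪w, v⟫)) =
      ENNReal.ofReal ((Real.pi / b) ^ ((d : ℝ) / 2) * Real.exp (c ^ 2 * ‖w‖ ^ 2 / (4 * b))) := by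
  have h0 := GaussianFourier.integral_rexp_neg_mul_sq_norm (V := EuclideanSpace ℝ (Fin d)) hb
  rw [finrank_euclideanSpace_fin] at h0
  have hi : Integrable (fun v : EuclideanSpace ℝ (Fin d) => Real.exp (-b * ‖v‖ ^ 2)) := by
    apply Integrable.of_integral_ne_zero
    rw [h0]; positivity
  have h1 := ofReal_integral_eq_lintegral_ofReal hi (.of_forall fun x => (Real.exp_pos _).le)
  rw [h0] at h1
  have e : ∀ v : EuclideanSpace ℝ (Fin d), Real.exp (-b * ‖v‖ ^ 2 + c * ⟪w, v⟫) =
      Real.exp (c ^ 2 * ‖w‖ ^ 2 / (4 * b)) * Real.exp (-b * ‖v - (c / (2 * b)) • w‖ ^ 2) := by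
    intro v
    rw [← Real.exp_add, norm_sub_sq_real, inner_smul_right, norm_smul, real_inner_comm v w]
    congr 1
    rw [mul_pow, Real.norm_eq_abs, sq_abs]
    field_simp
    ring
  simp_rw [e]
  simp_rw [ENNReal.ofReal_mul (Real.exp_pos _).le]
  rw [lintegral_const_mul' _ _ (by simp), lintegral_sub_right_eq_self
    (fun v : EuclideanSpace ℝ (Fin d) => ENNReal.ofReal (Real.exp (-b * ‖v‖ ^ 2))), ← h1,
    ← ENNReal.ofReal_mul (Real.exp_pos _).le, mul_comm]

theorem lower_bound (d : ℕ) (U : EuclideanSpace ℝ (Fin d) → ℝ) (hU : ContDiff ℝ 1 U)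
    (hc : ConvexOn ℝ Set.univ U) : ∃ g : EuclideanSpace ℝ (Fin d), ∀ x, U 0 + ⟪g, x⟫ ≤ U x := by
  have hd : DifferentiableAt ℝ U 0 := (hU.differentiable (by norm_num)) 0
  refine ⟨gradient U 0, fun x => ?_⟩
  have hg : ⟪gradient U 0, x⟫ = fderiv ℝ U 0 x := by
    rw [gradient, InnerProductSpace.toDual_symm_apply]
  rw [hg]
  have hl : HasDerivAt (fun s : ℝ => U (s • x)) (fderiv ℝ U 0 x) 0 := by
    have h1 : HasDerivAt (fun s : ℝ => s • x) x 0 := by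
      simpa using (hasDerivAt_id (0:ℝ)).smul_const x
    have h2 : HasFDerivAt U (fderiv ℝ U 0) ((0:ℝ) • x) := by
      rw [zero_smul]; exact hd.hasFDerivAt
    exact h2.comp_hasDerivAt (0:ℝ) h1
  have hcl : ConvexOn ℝ Set.univ (fun s : ℝ => U (s • x)) := by
    have := hc.comp_linearMap (LinearMap.toSpanSingleton ℝ (EuclideanSpace ℝ (Fin d)) x)
    simpa [Function.comp_def] using this
  have := hcl.le_slope_of_hasDerivAt (Set.mem_univ 0) (Set.mem_univ 1) one_pos hl
  simp [slope_def_field] at this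
  linarith

theorem gibbs_lint (d : ℕ) (W : EuclideanSpace ℝ (Fin d) → ℝ) (hW : Continuous W)
    (φ : EuclideanSpace ℝ (Fin d) → ENNReal) (hφ : Measurable φ) :
    ∫⁻ x, φ x ∂(gibbsMeasure d W) = ∫⁻ x, (∫⁻ x, ENNReal.ofReal (Real.exp (-W x)))⁻¹ *
      (ENNReal.ofReal (Real.exp (-W x)) * φ x) := by
  have hm : Measurable fun x => ENNReal.ofReal (Real.exp (-W x)) := by fun_prop
  rw [gibbsMeasure, lintegral_smul_measure, lintegral_withDensity_eq_lintegral_mul _ hm hφ,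
    lintegral_const_mul _ (by fun_prop)]
  simp

theorem Z_pos (d : ℕ) (W : EuclideanSpace ℝ (Fin d) → ℝ) (hW : Continuous W) :
    ∫⁻ x, ENNReal.ofReal (Real.exp (-W x)) ≠ 0 := by
  rw [Ne, lintegral_eq_zero_iff (by fun_prop)]
  intro h
  have : ∀ᵐ x : EuclideanSpace ℝ (Fin d), False := by
    filter_upwards [h] with x hx
    simp at hx
    exact absurd hx (not_le.2 (Real.exp_pos _))
  rw [Filter.eventually_false_iff_eq_bot, ae_eq_bot] at this
  exact (NeZero.ne (volume : Measure (EuclideanSpace ℝ (Fin d)))) this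

theorem Z_fin (d : ℕ) (W : EuclideanSpace ℝ (Fin d) → ℝ) 
    (hint : Integrable (fun x => Real.exp (-W x)) volume) :
    ∫⁻ x, ENNReal.ofReal (Real.exp (-W x)) ≠ ⊤ := by
  rw [← ofReal_integral_eq_lintegral_ofReal hint (.of_forall fun x => (Real.exp_pos _).le)]
  simp

theorem gibbs_prob (d : ℕ) (W : EuclideanSpace ℝ (Fin d) → ℝ) (hW : Continuous W)
    (hint : Integrable (fun x => Real.exp (-W x)) volume) :
    IsProbabilityMeasure (gibbsMeasure d W) := by
  constructor
  rw [← lintegral_one, gibbs_lint d W hW _ measurable_const, lintegral_const_mul _ (by fun_prop)]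
  simp only [mul_one]
  exact ENNReal.inv_mul_cancel (Z_pos d W hW) (Z_fin d W hint)

theorem L_fin (d : ℕ) (α : ℝ) (hα : 0 < α)
    (W : EuclideanSpace ℝ (Fin d) → ℝ) (hW : ContDiff ℝ 1 W)
    (hconv : ConvexOn ℝ Set.univ (fun x => W x - (α / 2) * ‖x‖ ^ 2))
    (v : EuclideanSpace ℝ (Fin d)) :
    ∫⁻ x, ENNReal.ofReal (Real.exp ⟪v, x⟫) ∂(gibbsMeasure d W) ≠ ⊤ := by
  have hWc := hW.continuous
  rw [gibbs_lint d W hWc _ (by fun_prop), lintegral_const_mul _ (by fun_prop)]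
  refine ENNReal.mul_ne_top (by simpa using Z_pos d W hWc) ?_
  obtain ⟨g, hg⟩ := lower_bound d _ (hW.sub (contDiff_const.mul (contDiff_norm_sq ℝ))) hconv
  have : ∀ x, ENNReal.ofReal (Real.exp (-W x)) * ENNReal.ofReal (Real.exp ⟪v, x⟫) ≤
      ENNReal.ofReal (Real.exp (-W 0)) *
        ENNReal.ofReal (Real.exp (-(α/2) * ‖x‖ ^ 2 + 1 * ⟪v - g, x⟫)) := by
    intro x
    rw [← ENNReal.ofReal_mul (Real.exp_pos _).le, ← ENNReal.ofReal_mul (Real.exp_pos _).le,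
      ← Real.exp_add, ← Real.exp_add]
    apply ENNReal.ofReal_le_ofReal
    apply Real.exp_le_exp.2
    have := hg x
    rw [inner_sub_left]
    simp only [norm_zero] at this
    linarith
  refine ne_top_of_le_ne_top ?_ (lintegral_mono this)
  rw [lintegral_const_mul' _ _ (by simp), gauss_lint d _ (by positivity)]
  exact ENNReal.mul_ne_top (by simp) (by simp)

theorem L_pl (d : ℕ) (α : ℝ) (hα : 0 < α)
    (W : EuclideanSpace ℝ (Fin d) → ℝ) (hW : ContDiff ℝ 1 W)
    (hconv : ConvexOn ℝ Set.univ (fun x => W x - (α / 2) * ‖x‖ ^ 2))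
    (hint : Integrable (fun x => Real.exp (-W x)) volume)
    (v : EuclideanSpace ℝ (Fin d)) (q : ℝ) (hq : 0 < q) (hq1 : q < 1) :
    (ENNReal.ofReal (Real.exp (-‖v‖ ^ 2 / (2 * α))) *
      ∫⁻ x, ENNReal.ofReal (Real.exp ⟪v, x⟫) ∂(gibbsMeasure d W)) ^ q ≤
    ∫⁻ x, ENNReal.ofReal (Real.exp (q * ⟪v, x⟫)) ∂(gibbsMeasure d W) := by
  have hWc := hW.continuous
  have hp : 0 < 1 - q := by linarith
  have := gibbs_prob d W hWc hint
  rw [← lintegral_const_mul' _ _ (by simp)]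
  have h1 : ∫⁻ x, (1 : ENNReal) ∂(gibbsMeasure d W) = 1 := by simp
  rw [gibbs_lint d W hWc _ measurable_const] at h1
  rw [gibbs_lint d W hWc _ (by fun_prop), gibbs_lint d W hWc _ (by fun_prop)]
  have key := pl_eucl (1 - q) q hp hq (by ring) d _ 
    (fun x => (∫⁻ x, ENNReal.ofReal (Real.exp (-W x)))⁻¹ *
      (ENNReal.ofReal (Real.exp (-W x)) * (ENNReal.ofReal (Real.exp (-‖v‖ ^ 2 / (2 * α))) *
      ENNReal.ofReal (Real.exp ⟪v, x⟫))))
    (fun x => (∫⁻ x, ENNReal.ofReal (Real.exp (-W x)))⁻¹ *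
      (ENNReal.ofReal (Real.exp (-W x)) * ENNReal.ofReal (Real.exp (q * ⟪v, x⟫))))
    (show Measurable (fun x => (∫⁻ x, ENNReal.ofReal (Real.exp (-W x)))⁻¹ *
      (ENNReal.ofReal (Real.exp (-W x)) * 1)) by fun_prop) (by fun_prop) (by fun_prop) ?_
  · rw [h1] at key
    simpa using key
  intro x y
  set Z := (∫⁻ x, ENNReal.ofReal (Real.exp (-W x)))⁻¹ with hZ
  have Z0 : Z ≠ 0 := by simpa [hZ] using Z_fin d W hint
  have Zt : Z ≠ ⊤ := by simpa [hZ] using Z_pos d W hWc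
  rw [ENNReal.mul_rpow_of_nonneg _ _ hp.le, ENNReal.mul_rpow_of_nonneg _ _ hq.le, mul_mul_mul_comm,
    ← ENNReal.rpow_add _ _ Z0 Zt, sub_add_cancel, ENNReal.rpow_one]
  refine mul_le_mul_right ?_ _
  simp only [mul_one, ← ENNReal.ofReal_mul (Real.exp_pos _).le, ← Real.exp_add]
  rw [ENNReal.ofReal_rpow_of_pos (Real.exp_pos _), ENNReal.ofReal_rpow_of_pos (Real.exp_pos _),
    ← Real.exp_mul, ← Real.exp_mul, ← ENNReal.ofReal_mul (Real.exp_pos _).le, ← Real.exp_add]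
  apply ENNReal.ofReal_le_ofReal
  apply Real.exp_le_exp.2
  have hc := hconv.2 (Set.mem_univ x) (Set.mem_univ y) hp.le hq.le (by ring)
  simp only [smul_eq_mul] at hc
  have e1 : ‖(1 - q) • x + q • y‖ ^ 2 = (1-q)^2 * ‖x‖^2 + 2 * ((1-q) * q * ⟪x, y⟫) + q^2 * ‖y‖^2 := by
    rw [norm_add_sq_real, norm_smul, norm_smul, inner_smul_left, inner_smul_right, mul_pow, mul_pow,
      Real.norm_eq_abs, Real.norm_eq_abs, sq_abs, sq_abs]
    simp; ring
  have e2 : 0 ≤ ‖v + α • (x - y)‖ ^ 2 := by positivity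
  rw [norm_add_sq_real, inner_smul_right, norm_smul, mul_pow, Real.norm_eq_abs, sq_abs,
    norm_sub_sq_real, inner_sub_right] at e2
  rw [inner_add_right, inner_smul_right, inner_smul_right]
  rw [e1] at hc
  have e3 : 0 ≤ (1-q) * q * ((‖v‖^2 + 2 * (α * (⟪v, x⟫ - ⟪v, y⟫)) + α^2 * (‖x‖^2 - 2 * ⟪x, y⟫ + ‖y‖^2)) / (2 * α)) := by
    positivity
  have e4 : (‖v‖^2 + 2 * (α * (⟪v, x⟫ - ⟪v, y⟫)) + α^2 * (‖x‖^2 - 2 * ⟪x, y⟫ + ‖y‖^2)) / (2 * α)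
    = ‖v‖^2 / (2 * α) + (⟪v, x⟫ - ⟪v, y⟫) + α/2 * (‖x‖^2 - 2 * ⟪x, y⟫ + ‖y‖^2) := by
    field_simp
  rw [e4] at e3
  rw [neg_div]
  have e5 : 0 ≤ ‖v‖^2 / (2 * α) := by positivity
  have e6 : 0 ≤ q * q * (‖v‖^2 / (2 * α)) := by positivity
  set N := ‖v‖^2 / (2 * α)
  nlinarith

open ProbabilityTheory in
theorem L_bound (d : ℕ) (α : ℝ) (hα : 0 < α)
    (W : EuclideanSpace ℝ (Fin d) → ℝ) (hW : ContDiff ℝ 1 W)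
    (hconv : ConvexOn ℝ Set.univ (fun x => W x - (α / 2) * ‖x‖ ^ 2))
    (hint : Integrable (fun x => Real.exp (-W x)) volume)
    (v : EuclideanSpace ℝ (Fin d)) :
    ∫⁻ x, ENNReal.ofReal (Real.exp ⟪v, x⟫) ∂(gibbsMeasure d W) ≤ 
    ENNReal.ofReal (Real.exp (⟪v, ∫ x, x ∂(gibbsMeasure d W)⟫ + ‖v‖ ^ 2 / (2 * α))) := by
  have hWc := hW.continuous
  have hprob := gibbs_prob d W hWc hint
  have hI : ∀ v : EuclideanSpace ℝ (Fin d), Integrable (fun x => Real.exp ⟪v, x⟫) (gibbsMeasure d W) := by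
    intro v
    refine ⟨by fun_prop, ?_⟩
    rw [hasFiniteIntegral_iff_ofReal (.of_forall fun x => (Real.exp_pos _).le)]
    exact (L_fin d α hα W hW hconv v).lt_top
  have hE : ∀ v : EuclideanSpace ℝ (Fin d), integrableExpSet (fun x => ⟪v, x⟫) (gibbsMeasure d W) = Set.univ := by
    intro v
    ext s
    simp only [Set.mem_univ, iff_true]
    have := hI (s • v)
    simpa [integrableExpSet, inner_smul_left] using this
  have hE0 : ∀ v : EuclideanSpace ℝ (Fin d), 0 ∈ interior (integrableExpSet (fun x => ⟪v, x⟫) (gibbsMeasure d W)) := by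
    intro v; rw [hE v]; simp
  have hid : Integrable (fun x => x) (gibbsMeasure d W) := by
    apply Integrable.of_eval_piLp
    intro i
    have := (memLp_of_mem_interior_integrableExpSet (hE0 (EuclideanSpace.single i 1)) 1).integrable le_rfl
    simpa [EuclideanSpace.inner_single_left] using this
  set X : EuclideanSpace ℝ (Fin d) → ℝ := fun x => ⟪v, x⟫ with hX
  have hmean : (∫ x, X x ∂(gibbsMeasure d W)) = ⟪v, ∫ x, x ∂(gibbsMeasure d W)⟫ :=
    integral_inner hid v
  have hmgf : ∀ s : ℝ, ENNReal.ofReal (mgf X (gibbsMeasure d W) s) =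
      ∫⁻ x, ENNReal.ofReal (Real.exp (s * ⟪v, x⟫)) ∂(gibbsMeasure d W) := by
    intro s
    have hi : s ∈ integrableExpSet X (gibbsMeasure d W) := by rw [hE]; trivial
    exact ofReal_integral_eq_lintegral_ofReal hi (.of_forall fun x => (Real.exp_pos _).le)
  have hpos : ∀ s : ℝ, 0 < mgf X (gibbsMeasure d W) s := by
    intro s
    have hi : s ∈ integrableExpSet X (gibbsMeasure d W) := by rw [hE]; trivial
    exact mgf_pos hi
  have h1 := hmgf 1
  simp only [one_mul] at h1
  have hstep : ∀ q : ℝ, 0 < q → q < 1 →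
      cgf X (gibbsMeasure d W) 1 - ‖v‖ ^ 2 / (2 * α) ≤ q⁻¹ * cgf X (gibbsMeasure d W) q := by
    intro q hq hq1
    have := L_pl d α hα W hW hconv hint v q hq hq1
    rw [← h1, ← hmgf q, ← ENNReal.ofReal_mul (Real.exp_pos _).le,
      ENNReal.ofReal_rpow_of_pos (by have := hpos 1; positivity),
      ENNReal.ofReal_le_ofReal_iff (hpos q).le] at this
    have h2 := Real.log_le_log (by have := hpos 1; positivity) this
    rw [Real.log_rpow (by have := hpos 1; positivity), Real.log_mul (Real.exp_pos _).ne' (hpos 1).ne',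
      Real.log_exp] at h2
    rw [cgf, cgf, inv_mul_eq_div, le_div_iff₀ hq]
    rw [neg_div] at h2
    linarith
  have hder : HasDerivAt (cgf X (gibbsMeasure d W)) (⟪v, ∫ x, x ∂(gibbsMeasure d W)⟫) 0 := by
    have := (analyticAt_cgf (hE0 v)).differentiableAt.hasDerivAt
    rw [deriv_cgf_zero (hE0 v)] at this
    simpa [← hmean] using this
  have hlim := hder.tendsto_slope_zero_right
  have hle : cgf X (gibbsMeasure d W) 1 - ‖v‖ ^ 2 / (2 * α) ≤ ⟪v, ∫ x, x ∂(gibbsMeasure d W)⟫ := by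
    refine ge_of_tendsto hlim ?_
    filter_upwards [Ioo_mem_nhdsGT (show (0:ℝ) < 1 by norm_num)] with q hq
    simpa using hstep q hq.1 hq.2
  rw [← h1]
  apply ENNReal.ofReal_le_ofReal
  rw [← Real.log_le_iff_le_exp (hpos 1)]
  rw [cgf] at hle
  linarith

theorem stmt4 (d : ℕ) (hd : 1 ≤ d) (α : ℝ) (hα : 0 < α)
    (W : EuclideanSpace ℝ (Fin d) → ℝ) (hW : ContDiff ℝ 1 W)
    (hconv : ConvexOn ℝ Set.univ (fun x => W x - (α / 2) * ‖x‖ ^ 2))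
    (hint : Integrable (fun x => Real.exp (-W x)) volume)
    (xstar : EuclideanSpace ℝ (Fin d)) :
    ∀ t : ℝ, 0 ≤ t → t < α / 2 →
      ∫⁻ x, ENNReal.ofReal (Real.exp (t * ‖x - xstar‖ ^ 2)) ∂(gibbsMeasure d W) ≤
        ENNReal.ofReal ((1 - 2 * t / α) ^ (-(d : ℝ) / 2) *
          Real.exp (2 * ‖(∫ x, x ∂(gibbsMeasure d W)) - xstar‖ ^ 2 * t / (1 - 2 * t / α))) := by
  intro t ht htα
  have hprob := gibbs_prob d W hW.continuous hint
  have hL := L_bound d α hα W hW hconv hint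
  set μ := gibbsMeasure d W
  set E := ∫ x, x ∂μ
  set r := 1 - 2 * t / α with hr
  have rpos : 0 < r := by
    rw [hr, sub_pos, div_lt_one hα]; linarith
  set s := Real.sqrt (2 * t)
  have hs : s ^ 2 = 2 * t := Real.sq_sqrt (by linarith)
  set c := (Real.pi / (1/2)) ^ ((d : ℝ) / 2) with hc
  have cpos : 0 < c := by positivity
  have e1 : ∀ x, ENNReal.ofReal (Real.exp (t * ‖x - xstar‖ ^ 2)) = ENNReal.ofReal c⁻¹ *
      ∫⁻ g : EuclideanSpace ℝ (Fin d), ENNReal.ofReal (Real.exp (-(1/2) * ‖g‖ ^ 2 + s * ⟪x - xstar, g⟫)) := by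
    intro x
    rw [gauss_lint d (1/2) (by norm_num), ← hc, ← ENNReal.ofReal_mul (by positivity), hs]
    congr 1
    field_simp
    ring_nf
  simp_rw [e1]
  rw [lintegral_const_mul' _ _ (by simp), lintegral_lintegral_swap (by fun_prop)]
  have e2 : ∀ g : EuclideanSpace ℝ (Fin d),
      ∫⁻ x, ENNReal.ofReal (Real.exp (-(1/2) * ‖g‖ ^ 2 + s * ⟪x - xstar, g⟫)) ∂μ ≤
      ENNReal.ofReal (Real.exp (-(r/2) * ‖g‖ ^ 2 + s * ⟪E - xstar, g⟫)) := by
    intro g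
    have : ∀ x, ENNReal.ofReal (Real.exp (-(1/2) * ‖g‖ ^ 2 + s * ⟪x - xstar, g⟫)) =
        ENNReal.ofReal (Real.exp (-(1/2) * ‖g‖ ^ 2 - s * ⟪xstar, g⟫)) *
        ENNReal.ofReal (Real.exp ⟪s • g, x⟫) := by
      intro x
      rw [← ENNReal.ofReal_mul (Real.exp_pos _).le, ← Real.exp_add, inner_sub_left, real_inner_smul_left,
        real_inner_comm g x]
      congr 2; ring
    simp_rw [this]
    rw [lintegral_const_mul' _ _ (by simp)]
    refine (mul_le_mul_right (hL _) _).trans (le_of_eq ?_)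
    rw [← ENNReal.ofReal_mul (Real.exp_pos _).le, ← Real.exp_add, inner_sub_left, real_inner_smul_left,
        real_inner_comm g E, norm_smul, mul_pow, Real.norm_eq_abs, sq_abs, hs, hr]
    congr 2
    field_simp
    ring
  refine (mul_le_mul_right (lintegral_mono e2) _).trans ?_
  rw [gauss_lint d _ (by positivity), ← ENNReal.ofReal_mul (by positivity), hs]
  apply ENNReal.ofReal_le_ofReal
  have e3 : (Real.pi / (r / 2)) ^ ((d : ℝ) / 2) = c * r ^ (-(d : ℝ) / 2) := by
    rw [hc, neg_div, Real.rpow_neg rpos.le, ← Real.inv_rpow rpos.le, ← Real.mul_rpow (by positivity) (by positivity)]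
    congr 1
    field_simp
  rw [e3, mul_assoc c, inv_mul_cancel_left₀ cpos.ne']
  refine mul_le_mul_of_nonneg_left (Real.exp_le_exp.2 ?_) (by positivity)
  rw [div_le_div_iff₀ (by positivity) rpos]
  have : 0 ≤ t * ‖E - xstar‖ ^ 2 * r := by positivity
  nlinarith
end

section
/- Let d ≥ 1 and let Q, V : ℝ^d → ℝ be C² functions with constants α_Q, α_V ∈ ℝ and β_V > 0 such that ∇²(Q + sV) ≽ (α_Q + s·α_V)·I with α_Q + s·α_V > 0 for every s ∈ [0,1], ∇²V ≼ β_V·I, and Q and V have a common stationary point x* with ∇Q(x*) = ∇V(x*) = 0 and V(x*) = 0. Then for every 0 ≤ λ ≤ λ' ≤ 1 with δ = λ' − λ, one has ∫ exp(−δ·V(x)) dπ_λ(x) ≥ exp( − δ·β_V·d / (2·(α_Q + λ·α_V)) ). -/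
open MeasureTheory

/-- The tempered probability measure `π_λ ∝ exp(−Q − λ V)` on `ℝ^d`. -/
noncomputable def tempMeasure (d : ℕ) (Q V : EuclideanSpace ℝ (Fin d) → ℝ) (lam : ℝ) :
    Measure (EuclideanSpace ℝ (Fin d)) :=
  ((volume.withDensity (fun x => ENNReal.ofReal (Real.exp (-(Q x + lam * V x))))) Set.univ)⁻¹ •
    volume.withDensity (fun x => ENNReal.ofReal (Real.exp (-(Q x + lam * V x))))

theorem aux_center {d : ℕ} (U : EuclideanSpace ℝ (Fin d) → ℝ) (c : ℝ)
    (x0 : EuclideanSpace ℝ (Fin d)) (hU : HasFDerivAt U (0 : EuclideanSpace ℝ (Fin d) →L[ℝ] ℝ) x0)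
    (hc : ConvexOn ℝ Set.univ (fun x => U x - (c / 2) * ‖x‖ ^ 2)) :
    ConvexOn ℝ Set.univ (fun y => U (x0 + y) - (c / 2) * ‖y‖ ^ 2) ∧
    ∀ y, U x0 ≤ U (x0 + y) - (c / 2) * ‖y‖ ^ 2 := by
  have hconv : ConvexOn ℝ Set.univ (fun y => U (x0 + y) - (c / 2) * ‖y‖ ^ 2) := by
    refine ⟨convex_univ, fun y _ z _ a b ha hb hab => ?_⟩
    have h := hc.2 (Set.mem_univ (x0 + y)) (Set.mem_univ (x0 + z)) ha hb hab
    have e : a • (x0 + y) + b • (x0 + z) = x0 + (a • y + b • z) := by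
      have : x0 = (a + b) • x0 := by rw [hab, one_smul]
      nth_rewrite 3 [this]
      module
    rw [e] at h
    simp only [smul_eq_mul, norm_add_sq_real, inner_add_right, inner_smul_right] at h ⊢
    have hb' : b = 1 - a := by linarith
    subst hb'
    linarith
  refine ⟨hconv, fun y => ?_⟩
  have hk : ConvexOn ℝ Set.univ (fun t : ℝ => U (x0 + t • y) - (c / 2) * ‖t • y‖ ^ 2) := by
    refine ⟨convex_univ, fun s _ t _ a b ha hb hab => ?_⟩
    have h := hconv.2 (Set.mem_univ (s • y)) (Set.mem_univ (t • y)) ha hb hab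
    have e : a • s • y + b • t • y = (a • s + b • t) • y := by
      simp only [smul_eq_mul]; module
    rw [e] at h
    exact h
  have hd : HasDerivAt (fun t : ℝ => U (x0 + t • y) - (c / 2) * ‖t • y‖ ^ 2) 0 0 := by
    have h1 : HasDerivAt (fun t : ℝ => x0 + t • y) y 0 := by
      simpa using ((hasDerivAt_id (0:ℝ)).smul_const y).const_add x0
    have h2 : HasDerivAt (fun t : ℝ => U (x0 + t • y)) 0 0 := by
      have hU' : HasFDerivAt U (0 : EuclideanSpace ℝ (Fin d) →L[ℝ] ℝ) (x0 + (0:ℝ) • y) := by simpa using hU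
      have := hU'.comp_hasDerivAt (0:ℝ) h1
      simp only [zero_apply] at this
      exact this
    have h3 : HasDerivAt (fun t : ℝ => (c / 2) * ‖t • y‖ ^ 2) 0 0 := by
      have := ((hasDerivAt_pow 2 (0:ℝ)).mul_const (‖y‖^2)).const_mul (c/2)
      simpa [norm_smul, mul_pow] using this
    have h4 := h2.sub h3
    rw [sub_zero] at h4
    exact h4
  have := hk.le_slope_of_hasDerivAt (Set.mem_univ 0) (Set.mem_univ 1) zero_lt_one hd
  simp [slope_def_field] at this
  linarith

theorem aux_gauss {d : ℕ} (b K : ℝ) (hb : 0 < b) :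
    ∫⁻ y : EuclideanSpace ℝ (Fin d), ENNReal.ofReal (Real.exp (K - b * ‖y‖ ^ 2)) < ⊤ := by
  have h := (GaussianFourier.integrable_cexp_neg_mul_sq_norm_add
    (V := EuclideanSpace ℝ (Fin d)) (b := (b : ℂ)) (by simpa using hb) 0 0).norm.const_mul
      (Real.exp K)
  have h2 : Integrable (fun y : EuclideanSpace ℝ (Fin d) => Real.exp (K - b * ‖y‖ ^ 2)) := by
    refine h.congr (Filter.Eventually.of_forall fun y => ?_)
    simp only [Complex.norm_exp, ← Real.exp_add]
    congr 1
    have : (-(b:ℂ) * (‖y‖:ℂ)^2 + 0 * ((inner ℝ (0 : EuclideanSpace ℝ (Fin d)) y : ℝ) : ℂ))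
      = ((-b * ‖y‖^2 : ℝ) : ℂ) := by push_cast; ring
    rw [this, Complex.ofReal_re]; ring
  exact (hasFiniteIntegral_iff_ofReal (Filter.Eventually.of_forall fun y =>
    (Real.exp_pos _).le)).1 h2.2

theorem stmt5 (d : ℕ) (hd : 1 ≤ d) (Q V : EuclideanSpace ℝ (Fin d) → ℝ)
    (hQ : ContDiff ℝ 2 Q) (hV : ContDiff ℝ 2 V)
    (αQ αV βV : ℝ) (hβV : 0 < βV)
    (hconv : ∀ s ∈ Set.Icc (0 : ℝ) 1,
      0 < αQ + s * αV ∧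
      ConvexOn ℝ Set.univ (fun x => Q x + s * V x - ((αQ + s * αV) / 2) * ‖x‖ ^ 2))
    (hsmooth : ConvexOn ℝ Set.univ (fun x => (βV / 2) * ‖x‖ ^ 2 - V x))
    (xstar : EuclideanSpace ℝ (Fin d))
    (hQcrit : fderiv ℝ Q xstar = 0) (hVcrit : fderiv ℝ V xstar = 0)
    (hVstar : V xstar = 0) :
    ∀ lam lam' : ℝ, 0 ≤ lam → lam ≤ lam' → lam' ≤ 1 →
      ENNReal.ofReal (Real.exp (-((lam' - lam) * βV * d) / (2 * (αQ + lam * αV)))) ≤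
        ∫⁻ x, ENNReal.ofReal (Real.exp (-((lam' - lam) * V x))) ∂(tempMeasure d Q V lam) := by
  intro lam lam' h0 h1 h2
  obtain ⟨hα, hcv⟩ := hconv lam ⟨h0, h1.trans h2⟩
  set α := αQ + lam * αV with hαdef
  set δ := lam' - lam with hδdef
  have hδ : 0 ≤ δ := sub_nonneg.2 h1
  have hVd : HasFDerivAt V (0 : EuclideanSpace ℝ (Fin d) →L[ℝ] ℝ) xstar := by
    rw [← hVcrit]; exact (hV.differentiable (by norm_num) xstar).hasFDerivAt
  have hQd : HasFDerivAt Q (0 : EuclideanSpace ℝ (Fin d) →L[ℝ] ℝ) xstar := by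
    rw [← hQcrit]; exact (hQ.differentiable (by norm_num) xstar).hasFDerivAt
  have hVb : ∀ y, V (xstar + y) ≤ βV / 2 * ‖y‖ ^ 2 := by
    intro y
    have := (aux_center (fun x => - V x) (-βV) xstar (by have h := hVd.neg; rw [neg_zero] at h; exact h)
      (by convert hsmooth using 2; ring)).2 y
    simp only [hVstar] at this
    linarith
  obtain ⟨gconv, gmin⟩ := aux_center (fun x => Q x + lam * V x) α xstar
    (by have h := hQd.add (hVd.const_mul lam); rw [smul_zero, add_zero] at h; exact h) hcv
  set f : EuclideanSpace ℝ (Fin d) → ℝ := fun x => Q x + lam * V x with hf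
  have hVc : Continuous V := hV.continuous
  have hfc : Continuous f := hQ.continuous.add (hVc.const_smul lam)
  set t : ℝ := Real.sqrt (1 + δ * βV / α) with ht
  have hq : 0 ≤ δ * βV / α := by positivity
  have ht2 : t ^ 2 = 1 + δ * βV / α := Real.sq_sqrt (by positivity)
  have ht1 : 1 ≤ t := by rw [ht, Real.one_le_sqrt]; linarith
  have ht0 : 0 < t := by linarith
  -- pointwise
  have hpt : ∀ y, f (xstar + y) + δ * V (xstar + y) ≤ f (xstar + t • y) := by
    intro y
    have h := gconv.2 (Set.mem_univ (t • y)) (Set.mem_univ 0) (inv_nonneg.2 ht0.le)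
      (sub_nonneg.2 (inv_le_one_of_one_le₀ ht1)) (by ring : t⁻¹ + (1 - t⁻¹) = 1)
    have hm := gmin (t • y)
    simp only [smul_smul, inv_mul_cancel₀ ht0.ne', one_smul, smul_zero, add_zero, smul_eq_mul,
      norm_zero, norm_smul, Real.norm_eq_abs, abs_of_pos ht0, mul_pow, ht2] at h hm
    have h3 := mul_le_mul_of_nonneg_left hm (sub_nonneg.2 (inv_le_one_of_one_le₀ ht1))
    have h4 : f (xstar + y) - α / 2 * ‖y‖ ^ 2 ≤
        f (xstar + t • y) - α / 2 * ((1 + δ * βV / α) * ‖y‖ ^ 2) := by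
      simp only [hf]
      nlinarith [h, h3]
    have h5 : α / 2 * ((1 + δ * βV / α) * ‖y‖ ^ 2)
        = α / 2 * ‖y‖ ^ 2 + δ * (βV / 2 * ‖y‖ ^ 2) := by field_simp
    have h6 := mul_le_mul_of_nonneg_left (hVb y) hδ
    linarith
  set F : EuclideanSpace ℝ (Fin d) → ENNReal := fun x => ENNReal.ofReal (Real.exp (-(f x)))
    with hF
  have hFm : Measurable F := by
    apply Measurable.ennreal_ofReal; exact (Real.continuous_exp.comp hfc.neg).measurable
  set Z := ∫⁻ x, F x with hZ
  have hZs : Z = ∫⁻ y, F (xstar + y) := (lintegral_add_left_eq_self F xstar).symm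
  have hZtop : Z ≠ ⊤ := by
    rw [hZs]
    refine ne_of_lt (lt_of_le_of_lt (lintegral_mono fun y => ?_)
      (aux_gauss (d := d) (α / 2) (-(f xstar)) (by positivity)))
    apply ENNReal.ofReal_le_ofReal
    apply Real.exp_le_exp.2
    have := gmin y
    simp only [hf]
    linarith
  have hZ0 : Z ≠ 0 := by
    intro h
    rw [hZ, lintegral_eq_zero_iff hFm] at h
    have : (Set.univ : Set (EuclideanSpace ℝ (Fin d))) = {x | ¬ F x = 0} := by
      ext x; simp [hF, Real.exp_pos]
    have h' : volume {x | ¬ F x = 0} = 0 := h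
    rw [← this] at h'
    exact (isOpen_univ.measure_pos volume Set.univ_nonempty).ne' h'
  have hscale : ∫⁻ y, F (xstar + t • y) = ENNReal.ofReal ((t ^ d)⁻¹) * Z := by
    have hm : Measurable (fun y => F (xstar + y)) := hFm.comp (measurable_const_add xstar)
    have := lintegral_map (μ := volume) hm (measurable_const_smul t)
    rw [Measure.map_addHaar_smul _ ht0.ne', lintegral_smul_measure, ← hZs] at this
    rw [← this]
    simp [abs_of_pos ht0]
  have hmain : ENNReal.ofReal ((t ^ d)⁻¹) * Z ≤
      ∫⁻ x, F x * ENNReal.ofReal (Real.exp (-(δ * V x))) := by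
    rw [← hscale, ← lintegral_add_left_eq_self
      (fun x => F x * ENNReal.ofReal (Real.exp (-(δ * V x)))) xstar]
    refine lintegral_mono fun y => ?_
    simp only [hF]
    rw [← ENNReal.ofReal_mul (Real.exp_pos _).le, ← Real.exp_add]
    apply ENNReal.ofReal_le_ofReal
    apply Real.exp_le_exp.2
    linarith [hpt y]
  have hexp : Real.exp (-(δ * βV * d) / (2 * α)) ≤ (t ^ d)⁻¹ := by
    have e1 : -(δ * βV * d) / (2 * α) = -((d:ℝ) * ((δ * βV / α) / 2)) := by field_simp
    rw [e1, Real.exp_neg, Real.exp_nat_mul]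
    apply inv_anti₀ (by positivity)
    apply pow_le_pow_left₀ ht0.le
    apply abs_le_of_sq_le_sq' _ (Real.exp_pos _).le |>.2
    rw [ht2, ← Real.exp_nat_mul]
    have := Real.add_one_le_exp (δ * βV / α)
    calc _ ≤ Real.exp (δ * βV / α) := by linarith
      _ = _ := by congr 1; push_cast; ring
  have hmu : tempMeasure d Q V lam = Z⁻¹ • volume.withDensity F := by
    simp only [tempMeasure, hZ, hF, hf, withDensity_apply _ MeasurableSet.univ,
      Measure.restrict_univ]
  have hGm : Measurable (fun x => ENNReal.ofReal (Real.exp (-(δ * V x)))) :=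
    Measurable.ennreal_ofReal (Real.continuous_exp.comp (hVc.const_smul δ).neg).measurable
  rw [hmu, lintegral_smul_measure, lintegral_withDensity_eq_lintegral_mul _ hFm hGm]
  calc _ ≤ ENNReal.ofReal ((t ^ d)⁻¹) := ENNReal.ofReal_le_ofReal hexp
    _ = Z⁻¹ * (ENNReal.ofReal ((t ^ d)⁻¹) * Z) := by
      rw [mul_comm, mul_assoc, ENNReal.mul_inv_cancel hZ0 hZtop, mul_one]
    _ ≤ _ := by
      rw [smul_eq_mul]
      exact mul_le_mul_right hmain _
end

section
/- Let T ≥ 0 be an integer, ε ∈ (0,1), η ∈ (0,1), and set J = 12·⌈log((T+1)/η)⌉ + 1. Let Z_0,…,Z_T be positive reals and, on a probability space, let {Ẑ_t^{(j)} : 0 ≤ t ≤ T, 1 ≤ j ≤ J} be real random variables such that the J random vectors (Ẑ_0^{(j)},…,Ẑ_T^{(j)}), j = 1,…,J, are mutually independent, and such that for every t and every j, P( |Ẑ_t^{(j)}/Z_t − 1| < ε/(T+1) ) ≥ 3/4. For each t, let M_t be the median of the J values Ẑ_t^{(1)},…,Ẑ_t^{(J)}. Then P( | (∏_{t=0}^T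 M_t) / (∏_{t=0}^T Z_t) − 1 | < 2ε ) ≥ 1 − η. -/
open MeasureTheory ProbabilityTheory

open scoped Classical in
/-- `m` is a median of the `J` values `x 1, …, x J`: it is one of the values, at least
half of the values are `≤ m` and at least half are `≥ m`. -/
def IsMedian {J : ℕ} (x : Fin J → ℝ) (m : ℝ) : Prop :=
  ∃ i : Fin J, x i = m ∧
    (J : ℝ) / 2 ≤ (Finset.univ.filter fun j => x j ≤ m).card ∧
    (J : ℝ) / 2 ≤ (Finset.univ.filter fun j => m ≤ x j).card


theorem chernoff_aux {Ω E : Type*} [MeasurableSpace Ω] [MeasurableSpace E] (P : Measure Ω)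
    [IsProbabilityMeasure P] (J : ℕ) (hJ : 0 < J) (V : Fin J → Ω → E)
    (hV : ∀ j, Measurable (V j)) (hind : iIndepFun V P) (G : Set E) (hG : MeasurableSet G)
    (hp : ∀ j, P.real (V j ⁻¹' G) ≤ 1 / 4) :
    P.real {ω | (J : ℝ) / 2 ≤ ∑ j, G.indicator (fun _ => (1 : ℝ)) (V j ω)}
      ≤ Real.exp (-(J / 8 : ℝ)) := by
  have hg : Measurable (G.indicator (fun _ => (1 : ℝ))) := measurable_const.indicator hG
  have hE : ∀ j, ∫ ω, G.indicator (fun _ => (1 : ℝ)) (V j ω) ∂P ≤ 1 / 4 := by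
    intro j
    have : (fun ω => G.indicator (fun _ => (1 : ℝ)) (V j ω))
        = (V j ⁻¹' G).indicator (fun _ => (1 : ℝ)) := by
      ext ω; by_cases h : V j ω ∈ G <;> simp [Set.indicator, Set.mem_preimage, h]
    rw [this, integral_indicator (hV j hG)]
    simpa using hp j
  have hsub : ∀ j ∈ (Finset.univ : Finset (Fin J)), HasSubgaussianMGF
      (fun ω => G.indicator (fun _ => (1 : ℝ)) (V j ω)
        - ∫ ω, G.indicator (fun _ => (1 : ℝ)) (V j ω) ∂P) ((‖(1 : ℝ) - 0‖₊ / 2) ^ 2) P := by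
    intro j _
    refine hasSubgaussianMGF_of_mem_Icc (hg.comp (hV j)).aemeasurable ?_
    refine Filter.Eventually.of_forall fun ω => ?_
    by_cases h : V j ω ∈ G <;> simp [h]
  have hind2 : iIndepFun (fun j ω => G.indicator (fun _ => (1 : ℝ)) (V j ω)
        - ∫ ω, G.indicator (fun _ => (1 : ℝ)) (V j ω) ∂P) P :=
    hind.comp (fun j e => G.indicator (fun _ => (1 : ℝ)) e
        - ∫ ω, G.indicator (fun _ => (1 : ℝ)) (V j ω) ∂P) (fun j => hg.sub_const _)
  have h := HasSubgaussianMGF.measure_sum_ge_le_of_iIndepFun hind2 hsub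
    (ε := (J : ℝ) / 4) (by positivity)
  have hJ' : (0 : ℝ) < J := by exact_mod_cast hJ
  refine (measureReal_mono ?_).trans (h.trans (le_of_eq ?_))
  · intro ω hω
    simp only [Set.mem_ofPred_eq, Finset.sum_sub_distrib] at hω ⊢
    have := Finset.sum_le_sum (s := Finset.univ) fun j _ => hE j
    simp only [Finset.sum_const, Finset.card_univ, Fintype.card_fin, nsmul_eq_mul] at this
    linarith
  · congr 1
    simp
    field_simp
    norm_num

theorem prod_aux (T : ℕ) (ε : ℝ) (h0 : 0 < ε) (h1 : ε < 1) (r : Fin (T + 1) → ℝ)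
    (hr : ∀ t, |r t - 1| < ε / (T + 1)) : |∏ t, r t - 1| < 2 * ε := by
  have h := Finset.norm_prod_one_add_sub_one_le Finset.univ (fun t => r t - 1)
  simp only [add_sub_cancel, Real.norm_eq_abs] at h
  have hs : ∑ t, |r t - 1| ≤ ε := by
    refine (Finset.sum_le_sum fun t _ => (hr t).le).trans ?_
    simp
    field_simp
    exact le_refl _
  have h2 := Real.exp_le_exp.mpr hs
  have h3 := (abs_le.mp (Real.abs_exp_sub_one_sub_id_le (x := ε) (by rw [abs_of_pos h0]; exact h1.le))).2
  nlinarith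

theorem median_aux {T J : ℕ} {x : Fin (T + 1) → Fin J → ℝ} {t : Fin (T + 1)} {m : ℝ}
    (hm : IsMedian (fun j => x t j) m) (z : ℝ) (hz : 0 < z) (δ : ℝ)
    (hB : ¬ (J : ℝ) / 2 ≤ ∑ j, ({v : Fin (T + 1) → ℝ | |v t / z - 1| < δ}ᶜ).indicator
      (fun _ => (1 : ℝ)) (fun s => x s j)) : |m / z - 1| < δ := by
  classical
  by_contra hcon
  apply hB
  obtain ⟨i, -, h1, h2⟩ := hm
  have key : ∀ p : Fin J → Prop, (∀ j, p j → ¬ |x t j / z - 1| < δ) →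
      ((Finset.univ.filter p).card : ℝ) ≤
       ∑ j, ({v : Fin (T + 1) → ℝ | |v t / z - 1| < δ}ᶜ).indicator
      (fun _ => (1 : ℝ)) (fun s => x s j) := by
    intro p hp
    rw [Finset.card_filter]
    push_cast
    refine Finset.sum_le_sum fun j _ => ?_
    by_cases hj : p j
    · simp only [hj, if_true]
      rw [Set.indicator_of_mem]
      exact hp j hj
    · simp only [hj, if_false]
      exact Set.indicator_nonneg (fun _ _ => zero_le_one) _
  rw [abs_lt, not_and_or, not_lt, not_lt] at hcon
  rcases hcon with hc | hc
  · have := key (fun j => x t j ≤ m) (fun j hj hlt => by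
      have := div_le_div_of_nonneg_right hj hz.le
      have := (abs_lt.mp hlt).1
      linarith)
    refine le_trans ?_ this
    convert h1
  · have := key (fun j => m ≤ x t j) (fun j hj hlt => by
      have := div_le_div_of_nonneg_right hj hz.le
      have := (abs_lt.mp hlt).2
      linarith)
    refine le_trans ?_ this
    convert h2

theorem stmt7 {Ω : Type*} [MeasurableSpace Ω] (P : Measure Ω) [IsProbabilityMeasure P]
    (T : ℕ) (ε η : ℝ) (hε : ε ∈ Set.Ioo (0 : ℝ) 1) (hη : η ∈ Set.Ioo (0 : ℝ) 1)
    (J : ℕ) (hJ : J = 12 * ⌈Real.log ((T + 1 : ℝ) / η)⌉₊ + 1)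
    (Z : Fin (T + 1) → ℝ) (hZ : ∀ t, 0 < Z t)
    (Zhat : Fin (T + 1) → Fin J → Ω → ℝ)
    (hmeas : ∀ t j, Measurable (Zhat t j))
    (hindep : iIndepFun (m := fun _ : Fin J => (inferInstance : MeasurableSpace (Fin (T + 1) → ℝ)))
      (fun j ω t => Zhat t j ω) P)
    (hconc : ∀ t j,
      ENNReal.ofReal (3 / 4) ≤ P {ω | |Zhat t j ω / Z t - 1| < ε / (T + 1)})
    (M : Fin (T + 1) → Ω → ℝ)
    (hM : ∀ t ω, IsMedian (fun j => Zhat t j ω) (M t ω)) :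
    ENNReal.ofReal (1 - η) ≤
      P {ω | |(∏ t, M t ω) / (∏ t, Z t) - 1| < 2 * ε} := by
  obtain ⟨hε0, hε1⟩ := hε
  obtain ⟨hη0, hη1⟩ := hη
  have hT : (0 : ℝ) < T + 1 := by positivity
  have hJpos : 0 < J := by omega
  have hJlog : Real.log ((T + 1 : ℝ) / η) ≤ J / 8 := by
    have h1 := Nat.le_ceil (Real.log ((T + 1 : ℝ) / η))
    have h2 : (J : ℝ) = 12 * (⌈Real.log ((T + 1 : ℝ) / η)⌉₊ : ℝ) + 1 := by
      rw [hJ]; push_cast; rfl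
    have h3 : (0 : ℝ) ≤ (⌈Real.log ((T + 1 : ℝ) / η)⌉₊ : ℝ) := Nat.cast_nonneg _
    linarith
  let G : Fin (T + 1) → Set (Fin (T + 1) → ℝ) :=
    fun t => {v | |v t / Z t - 1| < ε / (T + 1)}ᶜ
  have hG : ∀ t, MeasurableSet (G t) := by
    intro t
    refine MeasurableSet.compl (measurableSet_lt ?_ measurable_const)
    fun_prop
  let B : Fin (T + 1) → Set Ω := fun t =>
    {ω | (J : ℝ) / 2 ≤ ∑ j, (G t).indicator (fun _ => (1 : ℝ)) (fun s => Zhat s j ω)}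
  have hVm : ∀ j, Measurable (fun ω t => Zhat t j ω) := by
    intro j; exact measurable_pi_lambda _ (fun t => hmeas t j)
  have hBm : ∀ t, MeasurableSet (B t) := by
    intro t
    refine measurableSet_le measurable_const (Finset.measurable_sum _ fun j _ => ?_)
    exact (measurable_const.indicator (hG t)).comp (hVm j)
  have hB : ∀ t, P.real (B t) ≤ η / (T + 1) := by
    intro t
    have h := chernoff_aux P J hJpos (fun j ω s => Zhat s j ω) hVm hindep (G t) (hG t) ?_
    · refine h.trans ?_
      have : η / (T + 1) = Real.exp (-Real.log ((T + 1 : ℝ) / η)) := by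
        rw [Real.exp_neg, Real.exp_log (by positivity), inv_div]
      rw [this]
      exact Real.exp_le_exp.mpr (by linarith)
    · intro j
      have h1 := hconc t j
      have hm : MeasurableSet {ω | |Zhat t j ω / Z t - 1| < ε / (T + 1)} := by
        refine measurableSet_lt ?_ measurable_const
        have := hmeas t j
        fun_prop
      have h2 : 3 / 4 ≤ P.real {ω | |Zhat t j ω / Z t - 1| < ε / (T + 1)} :=
        (ENNReal.ofReal_le_iff_le_toReal (measure_ne_top _ _)).mp h1
      have h3 := probReal_compl_eq_one_sub (μ := P) hm
      have h4 : (fun ω s => Zhat s j ω) ⁻¹' (G t)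
        = {ω | |Zhat t j ω / Z t - 1| < ε / (T + 1)}ᶜ := rfl
      rw [h4, h3]; linarith
  have hU : P.real (⋃ t, B t) ≤ η := by
    refine (measureReal_iUnion_fintype_le B).trans ?_
    refine (Finset.sum_le_sum fun t _ => hB t).trans ?_
    simp
    field_simp
    exact le_refl _
  have hUc : 1 - η ≤ P.real (⋃ t, B t)ᶜ := by
    rw [probReal_compl_eq_one_sub (MeasurableSet.iUnion hBm)]; linarith
  refine (ENNReal.ofReal_le_ofReal hUc).trans ?_
  rw [Measure.real, ENNReal.ofReal_toReal (measure_ne_top _ _)]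
  refine measure_mono ?_
  intro ω hω
  simp only [Set.mem_compl_iff, Set.mem_iUnion, not_exists] at hω
  simp only [Set.mem_ofPred_eq]
  rw [← Finset.prod_div_distrib]
  refine prod_aux T ε hε0 hε1 (fun t => M t ω / Z t) fun t => ?_
  exact median_aux (hM t ω) (Z t) (hZ t) _ (hω t)
end

section
/- Let (Ω, F, P) be a probability space, T ≥ 0 an integer, V_0,…,V_T real random variables, and Ω = C_{−1} ⊇ C_0 ⊇ ⋯ ⊇ C_{T−1} a decreasing sequence of events with P(C_{T−1}) > 0. Then for every ε ∈ (0,2): P( |∏_{t=0}^T V_t − 1| ≥ ε ) ≤ P(C_{T−1}^c) + (4(T+1)²/ε²) · Σ_{t=0}^T E[ (V_t − 1)² ∣ C_{t−1} ]. -/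
open MeasureTheory

/-- Conditional expectation of the nonnegative (possibly infinite) random variable `X`
given the event `C`, namely `E[X·1_C]/P(C)`, valued in `[0,∞]`. -/
noncomputable def condExpEvent {Ω : Type*} [MeasurableSpace Ω] (P : Measure Ω)
    (C : Set Ω) (X : Ω → ENNReal) : ENNReal :=
  (∫⁻ ω in C, X ω ∂P) / P C

theorem stmt8 {Ω : Type*} [MeasurableSpace Ω] (P : Measure Ω) [IsProbabilityMeasure P]
    (T : ℕ) (V : Fin (T + 1) → Ω → ℝ) (hV : ∀ t, Measurable (V t))
    -- `D t` plays the role of `C_{t-1}`, for `t = 0, …, T`; so `D 0 = C_{-1} = Ω`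
    -- and `D (Fin.last T) = C_{T-1}`.
    (D : Fin (T + 1) → Set Ω) (hDmeas : ∀ t, MeasurableSet (D t))
    (hD0 : D 0 = Set.univ) (hmono : Antitone D)
    (hpos : 0 < P (D (Fin.last T))) :
    ∀ ε : ℝ, ε ∈ Set.Ioo (0 : ℝ) 2 →
      P {ω | ε ≤ |(∏ t, V t ω) - 1|} ≤
        P (D (Fin.last T))ᶜ +
          ENNReal.ofReal (4 * (T + 1) ^ 2 / ε ^ 2) *
            ∑ t, condExpEvent P (D t) (fun ω => ENNReal.ofReal ((V t ω - 1) ^ 2)) := by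
  rintro ε ⟨h0, h2⟩
  have hn : (0:ℝ) < (T:ℝ) + 1 := by positivity
  have hδ : 0 < ε / (2 * ((T:ℝ) + 1)) := by positivity
  set δ : ℝ := ε / (2 * ((T:ℝ) + 1)) with hδdef
  have hδn : ((T:ℝ) + 1) * δ = ε / 2 := by rw [hδdef]; field_simp
  have hc : 4 * ((T:ℝ) + 1) ^ 2 / ε ^ 2 = (δ ^ 2)⁻¹ := by
    rw [hδdef]; field_simp; norm_num
  rw [hc, Finset.mul_sum]
  have key : {ω | ε ≤ |(∏ t, V t ω) - 1|} ⊆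
      (D (Fin.last T))ᶜ ∪ ⋃ t, ({ω | ENNReal.ofReal (δ ^ 2) ≤ ENNReal.ofReal ((V t ω - 1) ^ 2)} ∩ D t) := by
    intro ω hω
    by_contra hcon
    simp only [Set.mem_union, Set.mem_compl_iff, Set.mem_iUnion, Set.mem_inter_iff,
      Set.mem_setOf_eq, not_or, not_not, not_exists, not_and] at hcon hω
    obtain ⟨hD, hall⟩ := hcon
    have hsmall : ∀ t, |V t ω - 1| < δ := by
      intro t
      by_contra hge
      push Not at hge
      refine hall t (ENNReal.ofReal_le_ofReal ?_) (hmono (Fin.le_last t) hD)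
      rw [← sq_abs (V t ω - 1)]
      exact pow_le_pow_left₀ hδ.le hge 2
    have hsum : ∑ t, ‖V t ω - 1‖ < ε / 2 := by
      calc ∑ t, ‖V t ω - 1‖ < ∑ _t : Fin (T + 1), δ :=
            Finset.sum_lt_sum_of_nonempty Finset.univ_nonempty (fun t _ => hsmall t)
        _ = ε / 2 := by simp [← hδn]
    have hs0 : 0 ≤ ∑ t, ‖V t ω - 1‖ := Finset.sum_nonneg (fun _ _ => norm_nonneg _)
    have h1 := Finset.norm_prod_one_add_sub_one_le Finset.univ (fun t => V t ω - 1)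
    simp only [add_sub_cancel] at h1
    have h3 := Real.abs_exp_sub_one_le (x := ∑ t, ‖V t ω - 1‖) (by rw [abs_of_nonneg hs0]; linarith)
    rw [abs_of_nonneg hs0] at h3
    have h4 := le_abs_self (Real.exp (∑ t, ‖V t ω - 1‖) - 1)
    rw [Real.norm_eq_abs] at h1
    linarith
  refine (measure_mono key).trans ((measure_union_le _ _).trans ?_)
  gcongr
  refine (measure_iUnion_le _).trans ?_
  rw [tsum_fintype]
  refine Finset.sum_le_sum fun t _ => ?_
  have hm : Measurable fun ω => ENNReal.ofReal ((V t ω - 1) ^ 2) :=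
    (((hV t).sub_const 1).pow_const 2).ennreal_ofReal
  have hmk := mul_meas_ge_le_lintegral₀ (μ := P.restrict (D t)) hm.aemeasurable
    (ENNReal.ofReal (δ ^ 2))
  rw [Measure.restrict_apply' (hDmeas t)] at hmk
  have hδ2 : 0 < δ ^ 2 := by positivity
  rw [ENNReal.ofReal_inv_of_pos hδ2, ← ENNReal.mul_le_iff_le_inv
    (by simpa using hδ2.ne') ENNReal.ofReal_ne_top]
  refine hmk.trans ?_
  unfold condExpEvent
  rw [ENNReal.div_eq_inv_mul]
  exact le_mul_of_one_le_left zero_le (ENNReal.one_le_inv.2 prob_le_one)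
end

section
/- Let K be a Markov kernel on a measurable space X that is reversible with respect to a probability measure π and has absolute spectral gap γ ∈ (0,1], let P ≥ 1 be an integer, and let (X_1,…,X_P) have the stationary chain law of length P for (K, π). Let g : X → ℝ be measurable with g ≤ 0 everywhere and ∫ g² dπ < ∞; set μ = ∫ g dπ, σ² = ∫ g² dπ − μ², and assume μ < 0 and σ² > 0. Let ḡ⁺(x) = max(g(x) − μ, 0). Then for every s ≥ 0: inf over θ > 0 of exp(−sPθ)·E[ exp( θ·Σ_{p=1}^P ( ḡ⁺(X_p) − ∫ ḡ⁺ dπ ) ) ] ≤ exp( −(Pγ/2)·min( s²/(4σ²), s/(10|μ|) ) ). -/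
open MeasureTheory

/-- The law of `(X_1, …, X_{n+1})` for a Markov chain with kernel `K` and initial
distribution `μ`. -/
noncomputable def chainLaw {X : Type*} [MeasurableSpace X] (K : X → Measure X)
    (μ : Measure X) : (n : ℕ) → Measure (Fin (n + 1) → X)
  | 0 => μ.map (fun x => fun _ => x)
  | n + 1 => (chainLaw K μ n).bind (fun xs => (K (xs (Fin.last n))).map (Fin.snoc xs))


namespace Stmt15Aux

/-- Bounded measurable functions. -/
def BM {X : Type*} [MeasurableSpace X] (h : X → ℝ) : Prop :=
  Measurable h ∧ ∃ C : ℝ, ∀ x, |h x| ≤ C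

section basic
variable {X : Type*} [MeasurableSpace X]

lemma BM.mul {f g : X → ℝ} (hf : BM f) (hg : BM g) : BM (fun x => f x * g x) := by
  obtain ⟨hf, C, hC⟩ := hf
  obtain ⟨hg, D, hD⟩ := hg
  refine ⟨hf.mul hg, C * D, fun x => ?_⟩
  rw [abs_mul]
  exact mul_le_mul (hC x) (hD x) (abs_nonneg _) ((abs_nonneg _).trans (hC x))

lemma BM.add {f g : X → ℝ} (hf : BM f) (hg : BM g) : BM (fun x => f x + g x) := by
  obtain ⟨hf, C, hC⟩ := hf
  obtain ⟨hg, D, hD⟩ := hg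
  exact ⟨hf.add hg, C + D, fun x => (abs_add_le _ _).trans (add_le_add (hC x) (hD x))⟩

lemma BM.sub {f g : X → ℝ} (hf : BM f) (hg : BM g) : BM (fun x => f x - g x) := by
  obtain ⟨hf, C, hC⟩ := hf
  obtain ⟨hg, D, hD⟩ := hg
  exact ⟨hf.sub hg, C + D, fun x => (abs_sub _ _).trans (add_le_add (hC x) (hD x))⟩

lemma BM.const (c : ℝ) : BM (fun _ : X => c) := ⟨measurable_const, |c|, fun _ => le_rfl⟩

lemma BM.sq {f : X → ℝ} (hf : BM f) : BM (fun x => f x ^ 2) := by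
  simpa [pow_two] using hf.mul hf

lemma BM.sqrt {f : X → ℝ} (hf : BM f) : BM (fun x => Real.sqrt (f x)) := by
  obtain ⟨hf, C, hC⟩ := hf
  refine ⟨hf.sqrt, Real.sqrt C, fun x => ?_⟩
  rw [abs_of_nonneg (Real.sqrt_nonneg _)]
  exact Real.sqrt_le_sqrt ((le_abs_self _).trans (hC x))

lemma BM.integrable {f : X → ℝ} (hf : BM f) (ν : Measure X) [IsProbabilityMeasure ν] :
    Integrable f ν := by
  obtain ⟨hf, C, hC⟩ := hf
  exact Integrable.of_bound hf.aestronglyMeasurable C (Filter.Eventually.of_forall hC)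

lemma BM.memLp {f : X → ℝ} (hf : BM f) (ν : Measure X) [IsProbabilityMeasure ν] :
    MemLp f 2 ν := by
  obtain ⟨hf, C, hC⟩ := hf
  exact MemLp.of_bound hf.aestronglyMeasurable C (Filter.Eventually.of_forall hC)

lemma cs {f g : X → ℝ} (hf : BM f) (hg : BM g) (ν : Measure X) [IsProbabilityMeasure ν] :
    (∫ x, f x * g x ∂ν) ^ 2 ≤ (∫ x, f x ^ 2 ∂ν) * ∫ x, g x ^ 2 ∂ν := by
  have h : ∀ t : ℝ, 0 ≤ (∫ x, f x ^ 2 ∂ν) * (t * t) + (2 * ∫ x, f x * g x ∂ν) * t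
      + ∫ x, g x ^ 2 ∂ν := by
    intro t
    have h0 : 0 ≤ ∫ x, (t * t * f x ^ 2 + (2 * t) * (f x * g x)) + g x ^ 2 ∂ν :=
      integral_nonneg fun x => by
        have := sq_nonneg (t * f x + g x)
        simp only [Pi.zero_apply]; nlinarith
    rw [integral_add ((((BM.const _).mul hf.sq).add ((BM.const _).mul (hf.mul hg))).integrable ν)
      (hg.sq.integrable ν), integral_add (((BM.const _).mul hf.sq).integrable ν)
      (((BM.const _).mul (hf.mul hg)).integrable ν), integral_const_mul, integral_const_mul] at h0
    linarith
  have := discrim_le_zero h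
  unfold discrim at this
  nlinarith

variable (K : X → Measure X) (π : Measure X)

lemma BM.ker {h : X → ℝ} (hh : BM h) (hK : ∀ x, IsProbabilityMeasure (K x))
    (hKmeas : Measurable K) : BM (fun x => ∫ y, h y ∂(K x)) := by
  obtain ⟨hm, C, hC⟩ := hh
  refine ⟨?_, C, fun x => ?_⟩
  · let κ : ProbabilityTheory.Kernel X X := ⟨K, hKmeas⟩
    have : ProbabilityTheory.IsMarkovKernel κ := ⟨hK⟩
    have : StronglyMeasurable fun x => ∫ y, h y ∂(κ x) :=
      StronglyMeasurable.integral_kernel (κ := κ) hm.stronglyMeasurable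
    exact this.measurable
  · have := hK x
    have h1 := norm_integral_le_of_norm_le_const (μ := K x) (f := h) (C := C)
      (Filter.Eventually.of_forall hC)
    simpa using h1

lemma bind_eq [IsProbabilityMeasure π] (hK : ∀ x, IsProbabilityMeasure (K x))
    (hKmeas : Measurable K) (hrev : Reversible K π) : π.bind K = π := by
  ext B hB
  rw [Measure.bind_apply hB hKmeas.aemeasurable]
  have := hrev Set.univ B MeasurableSet.univ hB
  simpa using this

lemma integral_ker [IsProbabilityMeasure π] (hK : ∀ x, IsProbabilityMeasure (K x))
    (hKmeas : Measurable K) (hrev : Reversible K π) {h : X → ℝ} (hh : BM h) :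
    ∫ x, ∫ y, h y ∂(K x) ∂π = ∫ x, h x ∂π := by
  have hb := bind_eq K π hK hKmeas hrev
  have hi : Integrable h (π.bind K) := by rw [hb]; exact hh.integrable π
  let κ : ProbabilityTheory.Kernel X X := ⟨K, hKmeas⟩
  have : ProbabilityTheory.IsMarkovKernel κ := ⟨hK⟩
  have := ProbabilityTheory.Kernel.integral_comp (η := κ)
    (κ := ProbabilityTheory.Kernel.const Unit π) (a := ()) (f := h) hi
  change ∫ x, h x ∂(π.bind K) = ∫ x, ∫ y, h y ∂(K x) ∂π at this
  rw [hb] at this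
  exact this.symm

/-- Quadratic form of the Leon-Perron operator. -/
noncomputable def Q (γ : ℝ) (h : X → ℝ) : ℝ :=
  γ * (∫ x, h x ∂π) ^ 2 + (1 - γ) * ∫ x, h x ^ 2 ∂π

lemma cross [IsProbabilityMeasure π] (hK : ∀ x, IsProbabilityMeasure (K x))
    (hKmeas : Measurable K) (hrev : Reversible K π) {γ : ℝ} (hγ : γ ∈ Set.Ioc (0 : ℝ) 1)
    (hgap : HasAbsSpectralGap K π γ) {h k : X → ℝ} (hh : BM h) (hk : BM k) :
    2 * ∫ x, k x * (∫ y, h y ∂(K x)) ∂π ≤ Q π γ k + Q π γ h := by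
  set m := ∫ x, h x ∂π with hm
  set l := ∫ x, k x ∂π with hl
  have hvar : ∀ {u : X → ℝ}, BM u → ∀ a : ℝ, ∫ x, u x ∂π = a →
      ∫ x, (u x - a) ^ 2 ∂π = ∫ x, u x ^ 2 ∂π - a ^ 2 := by
    intro u hu a ha
    have : ∀ x, (u x - a) ^ 2 = (u x ^ 2 - (2 * a) * u x) + a ^ 2 := fun x => by ring
    simp_rw [this]
    rw [integral_add ((hu.sq.sub ((BM.const _).mul hu)).integrable π)
      ((BM.const _).integrable π), integral_sub (hu.sq.integrable π)
      (((BM.const _).mul hu).integrable π), integral_const_mul, ha]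
    simp; ring
  have hh0 : BM (fun x => h x - m) := hh.sub (BM.const m)
  have hk0 : BM (fun x => k x - l) := hk.sub (BM.const l)
  have hKh := hh.ker K hK hKmeas
  have hKh0 := hh0.ker K hK hKmeas
  have hKeq : ∀ x, ∫ y, (h y - m) ∂(K x) = (∫ y, h y ∂(K x)) - m := by
    intro x
    have := hK x
    rw [integral_sub (hh.integrable _) ((BM.const _).integrable _)]
    simp
  have hz : ∫ x, (h x - m) ∂π = 0 := by
    rw [integral_sub (hh.integrable _) ((BM.const _).integrable _)]
    simp [hm]
  have hg1 := hgap _ (hh0.memLp π) hz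
  have hc := cs hk0 hKh0 π
  have hdecomp : ∫ x, k x * (∫ y, h y ∂(K x)) ∂π
      = l * m + ∫ x, (k x - l) * (∫ y, (h y - m) ∂(K x)) ∂π := by
    simp_rw [hKeq]
    have : ∀ x, (k x - l) * ((∫ y, h y ∂(K x)) - m)
      = ((k x * (∫ y, h y ∂(K x)) - m * k x) - l * (∫ y, h y ∂(K x))) + l * m := fun x => by ring
    simp_rw [this]
    rw [integral_add ((((hk.mul hKh).sub ((BM.const _).mul hk)).sub
        ((BM.const _).mul hKh)).integrable π) ((BM.const _).integrable π),
      integral_sub (((hk.mul hKh).sub ((BM.const _).mul hk)).integrable π)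
        (((BM.const _).mul hKh).integrable π),
      integral_sub ((hk.mul hKh).integrable π) (((BM.const _).mul hk).integrable π),
      integral_const_mul, integral_const_mul, integral_ker K π hK hKmeas hrev hh]
    simp [← hm, ← hl]; ring
  rw [hvar hh m rfl] at hg1
  rw [hvar hk l rfl] at hc
  have hV1 : 0 ≤ ∫ x, k x ^ 2 ∂π - l ^ 2 := by
    rw [← hvar hk l rfl]; exact integral_nonneg fun x => sq_nonneg _
  have hV2 : 0 ≤ ∫ x, h x ^ 2 ∂π - m ^ 2 := by
    rw [← hvar hh m rfl]; exact integral_nonneg fun x => sq_nonneg _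
  rw [hdecomp]
  unfold Q
  rw [← hm, ← hl]
  set a := ∫ x, (k x - l) * (∫ y, (h y - m) ∂(K x)) ∂π
  set V1 := ∫ x, k x ^ 2 ∂π - l ^ 2 with hV1d
  set V2 := ∫ x, h x ^ 2 ∂π - m ^ 2 with hV2d
  have e1 : ∫ x, k x ^ 2 ∂π = V1 + l ^ 2 := by rw [hV1d]; ring
  have e2 : ∫ x, h x ^ 2 ∂π = V2 + m ^ 2 := by rw [hV2d]; ring
  rw [e1, e2]
  have hl0 : 0 ≤ 1 - γ := by linarith [hγ.2]
  have h3 : a ^ 2 ≤ ((1 - γ) * (V1 + V2) / 2) ^ 2 := by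
    have h4 : a ^ 2 ≤ V1 * ((1 - γ) ^ 2 * V2) := hc.trans (mul_le_mul_of_nonneg_left hg1 hV1)
    nlinarith [mul_nonneg (sq_nonneg (1 - γ)) (sq_nonneg (V1 - V2))]
  have h5 : a ≤ (1 - γ) * (V1 + V2) / 2 := abs_le_of_sq_le_sq' h3 (by positivity) |>.2
  nlinarith [sq_nonneg (l - m)]

lemma Q_le [IsProbabilityMeasure π] {γ : ℝ} (hγ : γ ∈ Set.Ioc (0 : ℝ) 1)
    {w p : X → ℝ} {r δ : ℝ} (hw : BM w) (hw0 : ∀ x, 0 < w x) (hp : BM p) (hδ : 0 < δ)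
    (hpδ : ∀ x, δ ≤ p x) (hpi : ∫ x, (p x)⁻¹ ∂π ≤ 1)
    (hpw : ∀ x, γ * p x * w x ≤ r - (1 - γ) * w x) {h : X → ℝ} (hh : BM h) :
    Q π γ (fun x => w x * h x) ≤ r * ∫ x, w x * h x ^ 2 ∂π := by
  unfold Q
  set A := ∫ x, w x * h x ∂π with hA
  have hpi' : BM (fun x => (p x)⁻¹) := by
    refine ⟨hp.1.inv, δ⁻¹, fun x => ?_⟩
    rw [abs_of_nonneg (inv_nonneg.2 (hδ.le.trans (hpδ x)))]
    exact inv_anti₀ hδ (hpδ x)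
  have key : ∫ x, ((2 * γ * A) * (w x * h x) - (γ * A ^ 2) * (p x)⁻¹)
        + (1 - γ) * (w x * h x) ^ 2 ∂π ≤ ∫ x, r * (w x * h x ^ 2) ∂π := by
    refine integral_mono (((((BM.const _).mul (hw.mul hh)).sub ((BM.const _).mul hpi')).add
      ((BM.const _).mul (hw.mul hh).sq)).integrable π)
      (((BM.const _).mul (hw.mul hh.sq)).integrable π) fun x => ?_
    have hp0 : 0 < p x := hδ.trans_le (hpδ x)
    have h1 : 0 ≤ γ * ((p x)⁻¹ * (p x * (w x * h x) - A) ^ 2) :=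
      mul_nonneg hγ.1.le (mul_nonneg (inv_nonneg.2 hp0.le) (sq_nonneg _))
    have h2 : γ * ((p x)⁻¹ * (p x * (w x * h x) - A) ^ 2)
        = γ * p x * (w x * h x) ^ 2 - 2 * γ * A * (w x * h x) + γ * A ^ 2 * (p x)⁻¹ := by
      field_simp
      ring
    have h3 := mul_le_mul_of_nonneg_right (hpw x) (mul_nonneg (hw0 x).le (sq_nonneg (h x)))
    simp only
    nlinarith
  rw [integral_add ((((BM.const _).mul (hw.mul hh)).sub ((BM.const _).mul hpi')).integrable π)
      (((BM.const _).mul (hw.mul hh).sq).integrable π),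
    integral_sub (((BM.const _).mul (hw.mul hh)).integrable π)
      (((BM.const _).mul hpi').integrable π), integral_const_mul, integral_const_mul,
    integral_const_mul, integral_const_mul, ← hA] at key
  have := mul_le_mul_of_nonneg_left hpi (mul_nonneg hγ.1.le (sq_nonneg A))
  nlinarith

lemma step [IsProbabilityMeasure π] (hK : ∀ x, IsProbabilityMeasure (K x))
    (hKmeas : Measurable K) (hrev : Reversible K π) {γ : ℝ} (hγ : γ ∈ Set.Ioc (0 : ℝ) 1)
    (hgap : HasAbsSpectralGap K π γ) {w : X → ℝ} (hw : BM w) {r : ℝ} (hr : 0 < r)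
    (hQ : ∀ h : X → ℝ, BM h → Q π γ (fun x => w x * h x) ≤ r * ∫ x, w x * h x ^ 2 ∂π)
    {h : X → ℝ} (hh : BM h) :
    ∫ x, w x * (∫ y, w y * h y ∂(K x)) ^ 2 ∂π ≤ r ^ 2 * ∫ x, w x * h x ^ 2 ∂π := by
  have hk := (hw.mul hh).ker K hK hKmeas
  set k : X → ℝ := fun x => ∫ y, w y * h y ∂(K x) with hkd
  have hk' : BM (fun x => r⁻¹ * k x) := (BM.const _).mul hk
  have h1 := cross K π hK hKmeas hrev hγ hgap (hw.mul hh) (hw.mul hk')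
  have h2 := hQ _ hk'
  have h3 := hQ _ hh
  have e1 : ∫ x, w x * (r⁻¹ * k x) * (∫ y, w y * h y ∂(K x)) ∂π
      = r⁻¹ * ∫ x, w x * k x ^ 2 ∂π := by
    rw [← integral_const_mul]
    congr 1; ext x; simp only [hkd]; ring
  have e2 : ∫ x, w x * (r⁻¹ * k x) ^ 2 ∂π = r⁻¹ ^ 2 * ∫ x, w x * k x ^ 2 ∂π := by
    rw [← integral_const_mul]
    congr 1; ext x; ring
  rw [e1] at h1
  rw [e2] at h2
  change ∫ x, w x * k x ^ 2 ∂π ≤ _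
  set N := ∫ x, w x * k x ^ 2 ∂π
  set M := ∫ x, w x * h x ^ 2 ∂π
  have h4 : r * (r⁻¹ ^ 2 * N) = r⁻¹ * N := by field_simp
  have h5 : r⁻¹ * N ≤ r * M := by linarith
  have h6 := mul_le_mul_of_nonneg_left h5 hr.le
  rw [← mul_assoc, mul_inv_cancel₀ hr.ne', one_mul] at h6
  linarith [h6, sq r, mul_assoc r r M, show r * (r * M) = r ^ 2 * M by ring]

lemma measurable_snoc_fun {n : ℕ} :
    Measurable (fun q : (Fin (n + 1) → X) × X =>
      (Fin.snoc (α := fun _ => X) q.1 q.2 : Fin (n + 2) → X)) := by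
  rw [measurable_pi_iff]
  intro i
  refine Fin.lastCases ?_ (fun j => ?_) i
  · simpa using measurable_snd
  · simp only [Fin.snoc_castSucc]
    exact (measurable_pi_apply j).comp measurable_fst

lemma measurable_snoc_right {n : ℕ} (xs : Fin (n + 1) → X) :
    Measurable (Fin.snoc (α := fun _ => X) xs : X → (Fin (n + 2) → X)) :=
  measurable_snoc_fun.comp measurable_prodMk_left

lemma measurable_stepKernel {n : ℕ} (hK : ∀ x, IsProbabilityMeasure (K x))
    (hKmeas : Measurable K) :
    Measurable (fun xs : Fin (n + 1) → X =>
      (K (xs (Fin.last n))).map (Fin.snoc (α := fun _ => X) xs)) := by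
  refine Measure.measurable_of_measurable_coe _ fun S hS => ?_
  let κ : ProbabilityTheory.Kernel (Fin (n + 1) → X) X :=
    ⟨fun xs => K (xs (Fin.last n)), hKmeas.comp (measurable_pi_apply _)⟩
  have : ProbabilityTheory.IsMarkovKernel κ := ⟨fun xs => hK _⟩
  have hmS := measurable_snoc_fun (X := X) (n := n) hS
  have := ProbabilityTheory.Kernel.measurable_kernel_prodMk_left (κ := κ) hmS
  convert this using 2 with xs
  rw [Measure.map_apply (measurable_snoc_right xs) hS]
  rfl

lemma lintegral_chain_succ (hK : ∀ x, IsProbabilityMeasure (K x))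
    (hKmeas : Measurable K) (n : ℕ) {w h : X → ENNReal} (hw : Measurable w) (hh : Measurable h) :
    ∫⁻ xs, (∏ i, w (xs i)) * h (xs (Fin.last (n + 1))) ∂(chainLaw K π (n + 1))
      = ∫⁻ xs, (∏ i, w (xs i)) * (∫⁻ y, w y * h y ∂(K (xs (Fin.last n))))
          ∂(chainLaw K π n) := by
  have hF : Measurable (fun xs : Fin (n + 2) → X =>
      (∏ i, w (xs i)) * h (xs (Fin.last (n + 1)))) :=
    (Finset.measurable_prod _ fun i _ => hw.comp (measurable_pi_apply i)).mul
      (hh.comp (measurable_pi_apply _))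
  rw [chainLaw, Measure.lintegral_bind (measurable_stepKernel K hK hKmeas).aemeasurable
    hF.aemeasurable]
  congr 1; ext xs
  rw [lintegral_map hF (measurable_snoc_right xs),
    ← lintegral_const_mul _ (show Measurable fun y => w y * h y from hw.mul hh)]
  congr 1; ext y
  rw [Fin.prod_univ_castSucc]
  simp [mul_assoc]

lemma chain_bound [IsProbabilityMeasure π] (hK : ∀ x, IsProbabilityMeasure (K x))
    (hKmeas : Measurable K) (hrev : Reversible K π) {γ : ℝ} (hγ : γ ∈ Set.Ioc (0 : ℝ) 1)
    (hgap : HasAbsSpectralGap K π γ) {w : X → ℝ} (hw : BM w) (hw0 : ∀ x, 0 < w x)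
    {r : ℝ} (hr : 0 < r)
    (hQ : ∀ h : X → ℝ, BM h → Q π γ (fun x => w x * h x) ≤ r * ∫ x, w x * h x ^ 2 ∂π)
    (n : ℕ) : ∀ h : X → ℝ, BM h → (∀ x, 0 ≤ h x) →
    ∫⁻ xs, (∏ i, ENNReal.ofReal (w (xs i))) * ENNReal.ofReal (h (xs (Fin.last n)))
      ∂(chainLaw K π n) ≤
      ENNReal.ofReal (r ^ n * Real.sqrt ((∫ x, w x ∂π) * ∫ x, w x * h x ^ 2 ∂π)) := by
  induction n with
  | zero =>
    intro h hh hh0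
    have hF : Measurable (fun xs : Fin 1 → X =>
        (∏ i, ENNReal.ofReal (w (xs i))) * ENNReal.ofReal (h (xs (Fin.last 0)))) :=
      (Finset.measurable_prod _ fun i _ =>
        hw.1.ennreal_ofReal.comp (measurable_pi_apply i)).mul
        (hh.1.ennreal_ofReal.comp (measurable_pi_apply _))
    rw [chainLaw, lintegral_map hF (show Measurable (fun x : X => fun _ : Fin 1 => x) from
      measurable_pi_iff.2 fun _ => measurable_id)]
    have : ∀ x, (∏ _i : Fin 1, ENNReal.ofReal (w x)) * ENNReal.ofReal (h x)
        = ENNReal.ofReal (w x * h x) := fun x => by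
      simp [ENNReal.ofReal_mul (hw0 x).le]
    simp only at this ⊢
    simp_rw [this]
    rw [← ofReal_integral_eq_lintegral_ofReal ((hw.mul hh).integrable π)
      (Filter.Eventually.of_forall fun x => mul_nonneg (hw0 x).le (hh0 x))]
    apply ENNReal.ofReal_le_ofReal
    rw [pow_zero, one_mul]
    apply Real.le_sqrt_of_sq_le
    have := cs hw.sqrt (hw.sqrt.mul hh) π
    have e1 : ∀ x, √(w x) * (√(w x) * h x) = w x * h x := fun x => by
      rw [← mul_assoc, Real.mul_self_sqrt (hw0 x).le]
    have e2 : ∀ x, (√(w x) * h x) ^ 2 = w x * h x ^ 2 := fun x => by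
      rw [mul_pow, Real.sq_sqrt (hw0 x).le]
    have e3 : ∀ x, √(w x) ^ 2 = w x := fun x => Real.sq_sqrt (hw0 x).le
    simp_rw [e1, e2, e3] at this
    exact this
  | succ n ih =>
    intro h hh hh0
    rw [lintegral_chain_succ K π hK hKmeas n (w := fun x => ENNReal.ofReal (w x))
      (h := fun x => ENNReal.ofReal (h x)) hw.1.ennreal_ofReal hh.1.ennreal_ofReal]
    have e : ∀ x, ∫⁻ y, ENNReal.ofReal (w y) * ENNReal.ofReal (h y) ∂(K x)
        = ENNReal.ofReal (∫ y, w y * h y ∂(K x)) := fun x => by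
      have := hK x
      rw [ofReal_integral_eq_lintegral_ofReal ((hw.mul hh).integrable _)
        (Filter.Eventually.of_forall fun x => mul_nonneg (hw0 x).le (hh0 x))]
      congr 1; ext y
      rw [ENNReal.ofReal_mul (hw0 y).le]
    simp_rw [e]
    refine (ih _ ((hw.mul hh).ker K hK hKmeas)
      fun x => integral_nonneg fun y => mul_nonneg (hw0 y).le (hh0 y)).trans ?_
    apply ENNReal.ofReal_le_ofReal
    rw [pow_succ, mul_assoc]
    refine mul_le_mul_of_nonneg_left ?_ (by positivity)
    have h1 := step K π hK hKmeas hrev hγ hgap hw hr hQ hh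
    have h0 : 0 ≤ ∫ x, w x ∂π := integral_nonneg fun x => (hw0 x).le
    calc _ ≤ √(r ^ 2 * ((∫ x, w x ∂π) * ∫ x, w x * h x ^ 2 ∂π)) := by
          apply Real.sqrt_le_sqrt
          calc _ ≤ _ := mul_le_mul_of_nonneg_left h1 h0
            _ = _ := by ring
      _ = _ := by rw [Real.sqrt_mul (by positivity), Real.sqrt_sq hr.le]

lemma chain_bound' [IsProbabilityMeasure π] (hK : ∀ x, IsProbabilityMeasure (K x))
    (hKmeas : Measurable K) (hrev : Reversible K π) {γ : ℝ} (hγ : γ ∈ Set.Ioc (0 : ℝ) 1)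
    (hgap : HasAbsSpectralGap K π γ) {w : X → ℝ} (hw : BM w) (hw0 : ∀ x, 0 < w x)
    {r : ℝ} (hr : 0 < r)
    (hQ : ∀ h : X → ℝ, BM h → Q π γ (fun x => w x * h x) ≤ r * ∫ x, w x * h x ^ 2 ∂π)
    (n : ℕ) :
    ∫⁻ xs, (∏ i, ENNReal.ofReal (w (xs i))) ∂(chainLaw K π n) ≤ ENNReal.ofReal (r ^ (n + 1)) := by
  have h1 := chain_bound K π hK hKmeas hrev hγ hgap hw hw0 hr hQ n (fun _ => 1) (BM.const 1)
    (fun _ => zero_le_one)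
  simp only [ENNReal.ofReal_one, mul_one, one_pow] at h1
  refine h1.trans (ENNReal.ofReal_le_ofReal ?_)
  have h0 : 0 ≤ ∫ x, w x ∂π := integral_nonneg fun x => (hw0 x).le
  rw [Real.sqrt_mul_self h0, pow_succ]
  refine mul_le_mul_of_nonneg_left ?_ (by positivity)
  have h2 := hQ (fun _ => 1) (BM.const 1)
  simp only [mul_one, one_pow, Q] at h2
  have h3 := cs hw (BM.const 1) π
  simp only [mul_one, one_pow, integral_const, probReal_univ, smul_eq_mul] at h3
  set m := ∫ x, w x ∂π
  have hl : 0 ≤ 1 - γ := by linarith [hγ.2]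
  have h4 : m ^ 2 ≤ r * m := by nlinarith [mul_le_mul_of_nonneg_left h3 hl]
  by_contra hc
  push Not at hc
  nlinarith [mul_pos (hr.trans hc) (sub_pos.2 hc)]

/-- Moment generating function bound. -/
lemma mgf_bound [IsProbabilityMeasure π] (hK : ∀ x, IsProbabilityMeasure (K x))
    (hKmeas : Measurable K) (hrev : Reversible K π) {γ : ℝ} (hγ : γ ∈ Set.Ioc (0 : ℝ) 1)
    (hgap : HasAbsSpectralGap K π γ) {f : X → ℝ} (hf : BM f) {c v τ : ℝ}
    (hfc : ∀ x, f x ≤ c) (hf0 : ∫ x, f x ∂π = 0) (hfv : ∫ x, f x ^ 2 ∂π ≤ v) (hτ : 0 < τ)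
    (hτc : τ * c < 1) (n : ℕ) :
    ∫⁻ xs, ENNReal.ofReal (Real.exp ((γ * τ) * ∑ i, f (xs i))) ∂(chainLaw K π n)
      ≤ ENNReal.ofReal (Real.exp (γ * (τ ^ 2 * v / (1 - τ * c)) * (n + 1))) := by
  set α := τ ^ 2 * v / (1 - τ * c) with hα
  have hδ : 0 < 1 - τ * c := by linarith
  have hv : 0 ≤ v := (integral_nonneg fun x => sq_nonneg (f x)).trans hfv
  have hα0 : 0 ≤ α := by positivity
  have hτf : ∀ x, τ * f x ≤ τ * c := fun x => mul_le_mul_of_nonneg_left (hfc x) hτ.le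
  have hw : BM (fun x => Real.exp ((γ * τ) * f x)) := by
    refine ⟨(hf.1.const_mul _).exp, Real.exp (γ * τ * c), fun x => ?_⟩
    rw [abs_of_pos (Real.exp_pos _)]
    exact Real.exp_le_exp.2 (mul_le_mul_of_nonneg_left (hfc x) (mul_pos hγ.1 hτ).le)
  have hp : BM (fun x => (1 + α) - τ * f x) := (BM.const _).sub ((BM.const _).mul hf)
  have hpδ : ∀ x, 1 - τ * c ≤ (1 + α) - τ * f x := fun x => by linarith [hτf x]
  have hpi' : BM (fun x => ((1 + α) - τ * f x)⁻¹) := by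
    refine ⟨hp.1.inv, (1 - τ * c)⁻¹, fun x => ?_⟩
    rw [abs_of_nonneg (inv_nonneg.2 (hδ.le.trans (hpδ x)))]
    exact inv_anti₀ hδ (hpδ x)
  have hpi : ∫ x, ((1 + α) - τ * f x)⁻¹ ∂π ≤ 1 := by
    have hD : 0 < 1 + α := by linarith
    have hDc : 0 < 1 + α - τ * c := by linarith
    have h1 : ∫ x, ((1 + α) - τ * f x)⁻¹ ∂π ≤ ∫ x, ((1 + α)⁻¹ + (τ / (1 + α) ^ 2) * f x)
        + (τ ^ 2 / ((1 + α) ^ 2 * (1 + α - τ * c))) * f x ^ 2 ∂π := by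
      refine integral_mono (hpi'.integrable π) ((((BM.const _).add ((BM.const _).mul hf)).add
        ((BM.const _).mul hf.sq)).integrable π) fun x => ?_
      have hpx : 0 < 1 + α - τ * f x := hδ.trans_le (hpδ x)
      have e : ((1 + α) - τ * f x)⁻¹ = ((1 + α)⁻¹ + (τ / (1 + α) ^ 2) * f x)
        + (τ ^ 2 / ((1 + α) ^ 2 * (1 + α - τ * f x))) * f x ^ 2 := by
        field_simp
        ring
      simp only
      rw [e]
      gcongr
      exact hfc x
    rw [integral_add (((BM.const _).add ((BM.const _).mul hf)).integrable π)
      (((BM.const _).mul hf.sq).integrable π), integral_add ((BM.const _).integrable π)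
      (((BM.const _).mul hf).integrable π), integral_const_mul, integral_const_mul, hf0] at h1
    simp only [integral_const, probReal_univ, smul_eq_mul, one_mul, mul_zero, add_zero] at h1
    refine h1.trans ?_
    have h2 : τ ^ 2 / ((1 + α) ^ 2 * (1 + α - τ * c)) * ∫ x, f x ^ 2 ∂π
        ≤ α / (1 + α) := by
      calc _ ≤ τ ^ 2 / ((1 + α) ^ 2 * (1 + α - τ * c)) * v :=
            mul_le_mul_of_nonneg_left hfv (by positivity)
        _ ≤ τ ^ 2 / ((1 + α) * (1 - τ * c)) * v := by
            gcongr
            · nlinarith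
            · linarith
        _ = α / (1 + α) := by
            rw [hα]; field_simp
    calc _ ≤ (1 + α)⁻¹ + α / (1 + α) := by linarith
      _ = 1 := by field_simp
  have hpw : ∀ x, γ * ((1 + α) - τ * f x) * Real.exp ((γ * τ) * f x)
      ≤ Real.exp (γ * α) - (1 - γ) * Real.exp ((γ * τ) * f x) := by
    intro x
    have e : Real.exp (γ * α) = Real.exp (γ * α - γ * τ * f x) * Real.exp ((γ * τ) * f x) := by
      rw [← Real.exp_add]; ring_nf
    have h1 := Real.add_one_le_exp (γ * α - γ * τ * f x)
    have h2 := mul_le_mul_of_nonneg_right h1 (Real.exp_pos ((γ * τ) * f x)).le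
    rw [← e] at h2
    nlinarith
  have hmain := chain_bound' K π hK hKmeas hrev hγ hgap hw (fun x => Real.exp_pos _)
    (Real.exp_pos (γ * α))
    (fun h hh => Q_le π hγ hw (fun x => Real.exp_pos _) hp hδ hpδ hpi hpw hh) n
  have e1 : ∀ xs : Fin (n + 1) → X, ENNReal.ofReal (Real.exp ((γ * τ) * ∑ i, f (xs i)))
      = ∏ i, ENNReal.ofReal (Real.exp ((γ * τ) * f (xs i))) := fun xs => by
    rw [Finset.mul_sum, Real.exp_sum, ENNReal.ofReal_prod_of_nonneg fun i _ => (Real.exp_pos _).le]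
  simp_rw [e1]
  refine hmain.trans_eq ?_
  rw [← Real.exp_nat_mul]
  congr 2
  push_cast; ring

end basic

end Stmt15Aux

open Stmt15Aux

theorem stmt15 {X : Type*} [MeasurableSpace X] (K : X → Measure X) (π : Measure X)
    (hK : ∀ x, IsProbabilityMeasure (K x)) (hKmeas : Measurable K)
    [IsProbabilityMeasure π]
    (γ : ℝ) (hγ : γ ∈ Set.Ioc (0 : ℝ) 1)
    (hrev : Reversible K π) (hgap : HasAbsSpectralGap K π γ)
    (n : ℕ) -- the chain has length `P = n + 1 ≥ 1`
    (g : X → ℝ) (hgmeas : Measurable g) (hgnonpos : ∀ x, g x ≤ 0)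
    (hgL2 : MemLp g 2 π)
    (μv σ2 cplus : ℝ)
    (hμv : μv = ∫ x, g x ∂π) (hσ2 : σ2 = (∫ x, (g x) ^ 2 ∂π) - μv ^ 2)
    (hcplus : cplus = ∫ x, max (g x - μv) 0 ∂π)
    (hμvneg : μv < 0) (hσ2pos : 0 < σ2) :
    ∀ s : ℝ, 0 ≤ s →
      ⨅ (θ : ℝ) (_ : 0 < θ),
          ENNReal.ofReal (Real.exp (-(s * (n + 1) * θ))) *
            ∫⁻ xs, ENNReal.ofReal
                (Real.exp (θ * ∑ i, (max (g (xs i) - μv) 0 - cplus)))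
              ∂(chainLaw K π n) ≤
        ENNReal.ofReal
          (Real.exp (-(((n + 1) * γ / 2) * min (s ^ 2 / (4 * σ2)) (s / (10 * |μv|))))) := by
  obtain ⟨c, hc⟩ : ∃ c, c = -μv := ⟨_, rfl⟩
  have hc0 : 0 < c := by linarith
  have hG0 : ∀ x, 0 ≤ max (g x - μv) 0 := fun x => le_max_right _ _
  have hGc : ∀ x, max (g x - μv) 0 ≤ c := fun x =>
    max_le (by linarith [hgnonpos x]) hc0.le
  have hG : BM (fun x => max (g x - μv) 0) :=
    ⟨(hgmeas.sub_const _).max measurable_const, c, fun x => by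
      rw [abs_of_nonneg (hG0 x)]; exact hGc x⟩
  have hcp0 : 0 ≤ cplus := by rw [hcplus]; exact integral_nonneg hG0
  have hf : BM (fun x => max (g x - μv) 0 - cplus) := hG.sub (BM.const _)
  have hfc : ∀ x, max (g x - μv) 0 - cplus ≤ c := fun x => by linarith [hGc x]
  have hf0 : ∫ x, (max (g x - μv) 0 - cplus) ∂π = 0 := by
    rw [integral_sub (hG.integrable _) ((BM.const _).integrable _), ← hcplus]
    simp
  have hgi : Integrable g π := hgL2.integrable (by norm_num)
  have hg2 : Integrable (fun x => g x ^ 2) π := hgL2.integrable_sq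
  have hgs : Integrable (fun x => g x ^ 2 - (2 * μv) * g x) π := hg2.sub (hgi.const_mul _)
  have hGs : ∫ x, (max (g x - μv) 0) ^ 2 ∂π ≤ σ2 := by
    have e : ∫ x, ((g x ^ 2 - (2 * μv) * g x) + μv ^ 2) ∂π = σ2 := by
      rw [integral_add hgs (integrable_const _),
        integral_sub hg2 (hgi.const_mul _), integral_const_mul, ← hμv, hσ2]
      simp; ring
    rw [← e]
    refine integral_mono (hG.sq.integrable π)
      ((hg2.sub (hgi.const_mul _)).add (integrable_const _)) fun x => ?_
    simp only
    rcases le_total (g x - μv) 0 with h | h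
    · rw [max_eq_right h]; nlinarith [sq_nonneg (g x - μv)]
    · rw [max_eq_left h]; nlinarith
  have hfv : ∫ x, (max (g x - μv) 0 - cplus) ^ 2 ∂π ≤ σ2 := by
    have : ∀ x, (max (g x - μv) 0 - cplus) ^ 2
        = ((max (g x - μv) 0) ^ 2 - (2 * cplus) * max (g x - μv) 0) + cplus ^ 2 :=
      fun x => by ring
    simp_rw [this]
    rw [integral_add ((hG.sq.sub ((BM.const _).mul hG)).integrable π)
      ((BM.const _).integrable π), integral_sub (hG.sq.integrable π)
      (((BM.const _).mul hG).integrable π), integral_const_mul, ← hcplus]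
    simp only [integral_const, probReal_univ, smul_eq_mul, one_mul]
    nlinarith [sq_nonneg cplus]
  intro s hs
  have hmain : ∀ τ : ℝ, 0 < τ → τ * c < 1 →
      (⨅ (θ : ℝ) (_ : 0 < θ),
          ENNReal.ofReal (Real.exp (-(s * (n + 1) * θ))) *
            ∫⁻ xs, ENNReal.ofReal
                (Real.exp (θ * ∑ i, (max (g (xs i) - μv) 0 - cplus)))
              ∂(chainLaw K π n)) ≤
      ENNReal.ofReal (Real.exp (((n + 1) * γ) * (τ ^ 2 * σ2 / (1 - τ * c) - s * τ))) := by
    intro τ hτ hτc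
    refine (iInf₂_le (γ * τ) (mul_pos hγ.1 hτ)).trans ?_
    refine (mul_le_mul_right (mgf_bound K π hK hKmeas hrev hγ hgap hf hfc hf0 hfv hτ hτc n)
      _).trans_eq ?_
    rw [← ENNReal.ofReal_mul (Real.exp_pos _).le, ← Real.exp_add]
    congr 2
    ring
  have habs : |μv| = c := by rw [abs_of_neg hμvneg, hc]
  rw [habs]
  rcases hs.eq_or_lt with h0 | hs
  · subst h0
    have ht : Filter.Tendsto (fun τ : ℝ => ENNReal.ofReal (Real.exp (((n + 1) * γ) *
        (τ ^ 2 * σ2 / (1 - τ * c) - 0 * τ)))) (nhdsWithin 0 (Set.Ioi 0))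
        (nhds (ENNReal.ofReal (Real.exp (((n + 1) * γ) *
        ((0:ℝ) ^ 2 * σ2 / (1 - 0 * c) - 0 * 0))))) := by
      refine Filter.Tendsto.mono_left (ContinuousAt.tendsto ?_) nhdsWithin_le_nhds
      refine ENNReal.continuous_ofReal.continuousAt.comp
        (Real.continuous_exp.continuousAt.comp ?_)
      refine ContinuousAt.mul continuousAt_const (ContinuousAt.sub
        (ContinuousAt.div (by fun_prop) (by fun_prop) (by simp)) (by fun_prop))
    have hle := ge_of_tendsto (b := _) ht (by
      filter_upwards [Ioo_mem_nhdsGT (inv_pos.2 hc0)] with τ hτ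
      exact hmain τ hτ.1 (by
        have := mul_lt_mul_of_pos_right hτ.2 hc0
        rwa [inv_mul_cancel₀ hc0.ne'] at this))
    refine hle.trans_eq ?_
    congr 2
    simp
  · have hd : 0 < 2 * σ2 + c * s := by positivity
    have hτ1 : 1 - s / (2 * σ2 + c * s) * c = 2 * σ2 / (2 * σ2 + c * s) := by
      field_simp; ring
    refine (hmain (s / (2 * σ2 + c * s)) (by positivity) ?_).trans ?_
    · have : 0 < 2 * σ2 / (2 * σ2 + c * s) := by positivity
      linarith
    · apply ENNReal.ofReal_le_ofReal
      apply Real.exp_le_exp.2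
      have e : (s / (2 * σ2 + c * s)) ^ 2 * σ2 / (1 - s / (2 * σ2 + c * s) * c)
          - s * (s / (2 * σ2 + c * s)) = -(s ^ 2 / (2 * σ2 + c * s)) / 2 := by
        rw [hτ1]; field_simp; ring
      rw [e]
      have hm : min (s ^ 2 / (4 * σ2)) (s / (10 * c)) ≤ s ^ 2 / (2 * σ2 + c * s) := by
        rcases le_total (c * s) (2 * σ2) with h | h
        · refine (min_le_left _ _).trans ?_
          gcongr
          linarith
        · refine (min_le_right _ _).trans ?_
          rw [div_le_div_iff₀ (by positivity) hd]
          nlinarith [mul_pos hc0 hs]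
      have := mul_le_mul_of_nonneg_left hm
        (show 0 ≤ ((n:ℝ) + 1) * γ / 2 by have := hγ.1; positivity)
      linarith
end

section
/- Let K be a Markov kernel on a measurable space X that is reversible with respect to a probability measure π and has absolute spectral gap γ ∈ (0,1]. Let Ω ≥ 1 and let μ̃ be a probability measure that is Ω-warm with respect to π. Let P ≥ 1 be an integer and let (X_1,…,X_P) have the chain law of length P for (K, μ̃). Let f : X → ℝ be measurable with |f(x)| ≤ B for all x, where B > 0. Then for every ε > 0: P( | P^{-1}·Σ_{p=1}^P f(X_p) − ∫ f dπ | ≥ ε ) ≤ 2Ω·exp( − Pγε²/(4B²) ). -/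
open MeasureTheory

lemma aux_numeric (t : ℝ) (h0 : 0 < t) (h1 : t ≤ 1) :
    t ≤ Real.sinh t ∧ Real.sinh t ≤ t + t^3/5 ∧ 1 ≤ Real.cosh t ∧
    t^4/50 ≤ t * Real.sinh t + 2 - 2 * Real.cosh t := by
  have e1 := Real.exp_bound (x := t) (by rw [abs_of_pos h0]; exact h1) (n := 6) (by norm_num)
  have e2 := Real.exp_bound (x := -t) (by rw [abs_neg, abs_of_pos h0]; exact h1) (n := 6) (by norm_num)
  rw [abs_neg, abs_of_pos h0] at e2
  rw [abs_of_pos h0] at e1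
  simp [Finset.sum_range_succ, Nat.factorial] at e1 e2
  rw [abs_le] at e1 e2
  have p6 : t^6 ≤ t^5 := pow_le_pow_of_le_one h0.le h1 (by norm_num)
  have p5 : t^5 ≤ t^4 := pow_le_pow_of_le_one h0.le h1 (by norm_num)
  have p4 : t^5 ≤ t^3 := pow_le_pow_of_le_one h0.le h1 (by norm_num)
  have q3 : 0 < t^3 := by positivity
  have q6 : 0 < t^6 := by positivity
  have p64 : t^6 ≤ t^4 := by linarith
  have p7 : t^7 ≤ t^6 := pow_le_pow_of_le_one h0.le h1 (by norm_num)
  rw [Real.sinh_eq, Real.cosh_eq]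
  have hh : t + t^3/6 + t^5/120 - t^6 * (7/4320) ≤ (Real.exp t - Real.exp (-t))/2 := by
    ring_nf at *; linarith
  refine ⟨by linarith, ?_, ?_, ?_⟩
  · ring_nf at *; linarith
  · have := Real.add_one_le_exp t; have := Real.add_one_le_exp (-t); linarith
  · have := mul_le_mul_of_nonneg_left hh h0.le
    ring_nf at *; linarith

lemma aux_two (t γ s : ℝ) (h0 : 0 < t) (ht : t ≤ γ) (hγ : γ ≤ 1) :
    (2-γ) * Real.cosh t + γ * s * Real.sinh t ≤
      Real.exp (t^2/γ + t*s) + (1-γ) * Real.exp (-(t^2/γ + t*s)) := by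
  obtain ⟨n1, n2, n3, n4⟩ := aux_numeric t h0 (ht.trans hγ)
  have hg : 0 < γ := by linarith
  obtain ⟨k, hk⟩ : ∃ k, k = Real.sinh t / t := ⟨_, rfl⟩
  have hk' : Real.sinh t = k * t := by rw [hk]; field_simp
  have hk1 : 1 ≤ k := by rw [hk, le_div_iff₀ h0]; linarith
  have hk2 : k - 1 ≤ t^2/5 := by
    have : k * t ≤ (1 + t^2/5) * t := by rw [← hk']; linarith
    have := le_of_mul_le_mul_right this h0
    linarith
  obtain ⟨z, hz⟩ : ∃ z, z = t^2/γ + t*s := ⟨_, rfl⟩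
  have hs : γ * s * Real.sinh t = γ * k * z - t * Real.sinh t := by
    rw [hk', hz]; field_simp; try ring
  rw [← hz, hs]
  have hsq : (k-1)^2 ≤ t^4/25 := by
    calc (k-1)^2 ≤ (t^2/5)^2 := by gcongr
      _ = t^4/25 := by ring
  have hc : 0 ≤ γ * (Real.cosh t - 1) := mul_nonneg hg.le (by linarith)
  suffices 2 - γ - (k-1)^2/2 ≤ Real.exp z + (1-γ) * Real.exp (-z) - γ*k*z by nlinarith
  rcases le_total z 0 with h | h
  · have a1 := Real.add_one_le_exp z
    have a2 := mul_le_mul_of_nonneg_left (Real.add_one_le_exp (-z)) (sub_nonneg.2 hγ)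
    have : 0 ≤ γ * (k-1) * (-z) := by
      apply mul_nonneg (mul_nonneg hg.le (by linarith)) (by linarith)
    nlinarith [sq_nonneg (k-1)]
  · have a1 : z ≤ Real.sinh z := Real.self_le_sinh_iff.2 h
    have a2 : 1 + z^2/2 ≤ Real.cosh z := by
      rw [show Real.cosh z = 1 + 2 * Real.sinh (z/2)^2 by
        have e := Real.cosh_two_mul (z/2)
        rw [show 2*(z/2) = z by ring] at e
        rw [e, Real.cosh_sq]; ring]
      have e3 : z/2 ≤ Real.sinh (z/2) := Real.self_le_sinh_iff.2 (by linarith)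
      nlinarith
    have e1 := Real.cosh_add_sinh z
    have e2 := Real.cosh_sub_sinh z
    have b1 := mul_le_mul_of_nonneg_left a1 hg.le
    have b2 := mul_le_mul_of_nonneg_left a2 (show 0 ≤ 2-γ by linarith)
    rw [← e1, ← e2]
    have b3 : 0 ≤ (1-γ) * z^2 := mul_nonneg (by linarith) (sq_nonneg _)
    have b4 : γ^2*(k-1)^2 ≤ 1 * (k-1)^2 := by
      gcongr; exact pow_le_one₀ hg.le hγ
    nlinarith [sq_nonneg (z - γ*(k-1))]

lemma aux_pos (t γ s : ℝ) (hγ0 : 0 < γ) (h0 : 0 < t) (hs : -1 ≤ s) :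
    1-γ < Real.exp (t^2/γ) * Real.exp (-(t*(1-s))) := by
  rw [← Real.exp_add]
  have : (-γ) + 1 < Real.exp (-γ) := Real.add_one_lt_exp (by linarith)
  have h2 : -γ ≤ t^2/γ + -(t*(1-s)) := by
    have : t^2/γ - 2*t + γ = (t-γ)^2/γ := by field_simp; ring
    have : 0 ≤ (t-γ)^2/γ := by positivity
    nlinarith
  have := Real.exp_le_exp.2 h2
  linarith

/-- the two point inequality, in terms of `u = r e^{-h}`, `v = r e^{-l}`. -/
lemma aux_two_point (t γ s u v : ℝ) (h0 : 0 < t) (ht : t ≤ γ) (hγ : γ ≤ 1)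
    (hu : u = Real.exp (t^2/γ) * Real.exp (-(t*(1-s))))
    (hv : v = Real.exp (t^2/γ) * Real.exp (t*(1+s)))
    (hul : 1-γ < u) (hvl : 1-γ < v) :
    (1+s)/2 * (γ/(u-(1-γ))) + (1-s)/2 * (γ/(v-(1-γ))) ≤ 1 := by
  have key := aux_two t γ s h0 ht hγ
  have h1 : u = Real.exp (t^2/γ + t*s) * Real.exp (-t) := by
    rw [hu, ← Real.exp_add, ← Real.exp_add]; ring_nf
  have h2 : v = Real.exp (t^2/γ + t*s) * Real.exp t := by
    rw [hv, ← Real.exp_add, ← Real.exp_add]; ring_nf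
  set E := Real.exp (t^2/γ + t*s)
  have hE : 0 < E := Real.exp_pos _
  have k2 := mul_le_mul_of_nonneg_left key hE.le
  have h3 : E * Real.exp (-(t^2/γ+t*s)) = 1 := by
    rw [← Real.exp_add]; simp
  have h4 : Real.exp t * Real.exp (-t) = 1 := by rw [← Real.exp_add]; simp
  have huv : u * v = E^2 := by rw [h1, h2]; linear_combination E^2 * h4
  have k3 : (1+s)/2 * γ * (v-(1-γ)) + (1-s)/2 * γ * (u-(1-γ)) ≤ (u-(1-γ)) * (v-(1-γ)) := by
    rw [Real.cosh_eq, Real.sinh_eq] at k2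
    have : (u-(1-γ)) * (v-(1-γ)) = E^2 - (1-γ)*(u+v) + (1-γ)^2 := by rw [← huv]; ring
    rw [this]
    have h5 : E * (E + (1-γ) * Real.exp (-(t^2/γ+t*s))) = E^2 + (1-γ) := by
      linear_combination (1-γ) * h3
    rw [h5] at k2
    rw [h1, h2]
    nlinarith
  have d1 : 0 < u - (1-γ) := by linarith
  have d2 : 0 < v - (1-γ) := by linarith
  have : (1+s)/2 * (γ/(u-(1-γ))) + (1-s)/2 * (γ/(v-(1-γ))) =
    ((1+s)/2 * γ * (v-(1-γ)) + (1-s)/2 * γ * (u-(1-γ))) / ((u-(1-γ)) * (v-(1-γ))) := by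
    field_simp
  rw [this, div_le_one (by positivity)]
  exact k3

/-- pointwise chord bound -/
lemma aux_chord (r lam y y1 y2 : ℝ) (hr : 0 < r) (hl : 0 ≤ lam) (hy1 : 0 < y1) (h1 : y1 ≤ y)
    (h2 : y ≤ y2) (hd : 0 < r - lam * y2) :
    y / (r - lam*y) ≤ y1/(r-lam*y1) + (y-y1) * (r/((r-lam*y1)*(r-lam*y2))) := by
  have e2 : 0 < r - lam*y := by nlinarith
  have e1 : 0 < r - lam*y1 := by nlinarith
  have : y1/(r-lam*y1) + (y-y1) * (r/((r-lam*y1)*(r-lam*y2))) - y / (r - lam*y)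
     = (r * lam * (y-y1)*(y2-y)) / ((r-lam*y1)*(r-lam*y2)*(r-lam*y)) := by
    obtain ⟨a, ha⟩ : ∃ a, a = r - lam*y := ⟨_, rfl⟩
    obtain ⟨b, hb⟩ : ∃ b, b = r - lam*y1 := ⟨_, rfl⟩
    obtain ⟨c, hc⟩ : ∃ c, c = r - lam*y2 := ⟨_, rfl⟩
    rw [← ha] at e2
    rw [← hb] at e1
    rw [← hc] at hd
    rw [← ha, ← hb, ← hc]
    field_simp
    rw [ha, hb, hc]; ring
  have h3 : 0 ≤ (r * lam * (y-y1)*(y2-y)) / ((r-lam*y1)*(r-lam*y2)*(r-lam*y)) := by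
    have := sub_nonneg.2 h1; have := sub_nonneg.2 h2
    positivity
  linarith

/-- convexity : for `α ∈ [0,1]`. -/
lemma aux_conv (r lam l h α : ℝ) (hr : 0 < r) (hl : 0 ≤ lam) (hlh : l ≤ h)
    (hα : 0 ≤ α) (hα1 : α ≤ 1) (hd : lam < r * Real.exp (-h)) :
    1 / (r * Real.exp (-(α*h+(1-α)*l)) - lam) ≤
      α * (1 / (r * Real.exp (-h) - lam)) + (1-α) * (1 / (r * Real.exp (-l) - lam)) := by
  have conv : ∀ x, 1 / (r * Real.exp (-x) - lam) = Real.exp x / (r - lam * Real.exp x) := by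
    intro x
    rw [show r - lam * Real.exp x = (r * Real.exp (-x) - lam) * Real.exp x by
      have : Real.exp (-x) * Real.exp x = 1 := by rw [← Real.exp_add]; simp
      linear_combination (-r) * this]
    rw [div_mul_eq_div_div_swap, div_self (Real.exp_pos x).ne']
  rw [conv, conv, conv]
  have hd' : 0 < r - lam * Real.exp h := by
    have := mul_lt_mul_of_pos_right hd (Real.exp_pos h)
    rw [mul_assoc, ← Real.exp_add] at this; simp at this; linarith
  have c := convexOn_exp.2 (Set.mem_univ h) (Set.mem_univ l) hα (sub_nonneg.2 hα1) (by ring)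
  simp only [smul_eq_mul] at c
  have hm1 : l ≤ α*h+(1-α)*l := by nlinarith
  have hm2 : α*h+(1-α)*l ≤ h := by nlinarith
  have ch := aux_chord r lam (Real.exp (α*h+(1-α)*l)) (Real.exp l) (Real.exp h) hr hl
    (Real.exp_pos l) (Real.exp_le_exp.2 hm1) (Real.exp_le_exp.2 hm2) hd'
  refine ch.trans ?_
  have hyy := Real.exp_le_exp.2 hlh
  have e1 : 0 < r - lam*Real.exp l := by nlinarith
  calc _ ≤ Real.exp l / (r - lam * Real.exp l) + (α*(Real.exp h - Real.exp l)) *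
        (r / ((r - lam * Real.exp l) * (r - lam * Real.exp h))) := by
        gcongr; linarith
    _ = _ := by
        obtain ⟨b, hb⟩ : ∃ b, b = r - lam*Real.exp l := ⟨_, rfl⟩
        obtain ⟨c, hc⟩ : ∃ c, c = r - lam*Real.exp h := ⟨_, rfl⟩
        rw [← hb] at e1
        rw [← hc] at hd'
        rw [← hb, ← hc]
        field_simp
        rw [hb, hc]; ring

lemma aux_bint {X : Type*} [MeasurableSpace X] {π : Measure X} [IsFiniteMeasure π] {g : X → ℝ}
    (hg : Measurable g) (C : ℝ) (hC : ∀ x, |g x| ≤ C) : Integrable g π :=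
  Integrable.of_bound hg.aestronglyMeasurable C (Filter.Eventually.of_forall hC)

lemma aux_int_inv {X : Type*} [MeasurableSpace X] (π : Measure X) [IsProbabilityMeasure π]
    (f : X → ℝ) (hf : Measurable f) (B : ℝ) (hB : 0 < B) (hfB : ∀ x, |f x| ≤ B)
    (θ γ : ℝ) (hθ : 0 < θ) (hθγ : θ * B ≤ γ) (hγ : γ ≤ 1) :
    (∀ x, 1 - γ < Real.exp ((θ*B)^2/γ) * Real.exp (-(θ * (f x - ∫ x, f x ∂π)))) ∧
    Integrable (fun x => 1 / (Real.exp ((θ*B)^2/γ) * Real.exp (-(θ * (f x - ∫ x, f x ∂π))) - (1-γ))) π ∧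
    γ * ∫ x, 1 / (Real.exp ((θ*B)^2/γ) * Real.exp (-(θ * (f x - ∫ x, f x ∂π))) - (1-γ)) ∂π ≤ 1 := by
  obtain ⟨m, hm⟩ : ∃ m, m = ∫ x, f x ∂π := ⟨_, rfl⟩
  have hfi : Integrable f π := aux_bint hf B hfB
  rw [← hm]
  have hmB : |m| ≤ B := by
    rw [hm]
    have := norm_integral_le_of_norm_le_const (μ := π) (f := f) (C := B)
      (Filter.Eventually.of_forall hfB)
    simpa using this
  have ht : 0 < θ*B := by positivity
  have hγ0 : 0 < γ := by linarith
  set s := m / B with hs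
  have hs1 : -1 ≤ s := by rw [hs, le_div_iff₀ hB]; linarith [(abs_le.1 hmB).1]
  have hs2 : s ≤ 1 := by rw [hs, div_le_iff₀ hB]; linarith [(abs_le.1 hmB).2]
  have hms : m = s * B := by rw [hs]; field_simp
  set t := θ*B with htd
  set r := Real.exp (t^2/γ) with hr
  have hr0 : 0 < r := Real.exp_pos _
  have hpos := aux_pos t γ s hγ0 ht hs1
  have hpos2 : 1 - γ < r * Real.exp (t*(1+s)) := by
    refine hpos.trans_le ?_
    gcongr; nlinarith
  have h2p := aux_two_point t γ s _ _ ht hθγ hγ rfl rfl hpos hpos2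
  have hD : ∀ x, r * Real.exp (-(t*(1-s))) ≤ r * Real.exp (-(θ * (f x - m))) := by
    intro x
    refine mul_le_mul_of_nonneg_left (Real.exp_le_exp.2 ?_) hr0.le
    have := (abs_le.1 (hfB x)).2
    rw [hms, htd]; nlinarith
  have hDpos : ∀ x, 1 - γ < r * Real.exp (-(θ * (f x - m))) := fun x => hpos.trans_le (hD x)
  have hmeas : Measurable (fun x => 1 / (r * Real.exp (-(θ * (f x - m))) - (1-γ))) := by fun_prop
  have hint : Integrable (fun x => 1 / (r * Real.exp (-(θ * (f x - m))) - (1-γ))) π := by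
    refine aux_bint hmeas (1 / (r * Real.exp (-(t*(1-s))) - (1-γ))) fun x => ?_
    have h1 := hDpos x
    have h2 := hD x
    rw [abs_of_nonneg (by apply div_nonneg zero_le_one; linarith)]
    apply one_div_le_one_div_of_le <;> linarith
  refine ⟨hDpos, hint, ?_⟩
  set u := 1 / (r * Real.exp (-(t*(1-s))) - (1-γ)) with hu
  set v := 1 / (r * Real.exp (t*(1+s)) - (1-γ)) with hv
  have hpt : ∀ x, 1 / (r * Real.exp (-(θ * (f x - m))) - (1-γ)) ≤
      ((f x + B)/(2*B)) * u + (1 - (f x + B)/(2*B)) * v := by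
    intro x
    have hx := abs_le.1 (hfB x)
    have := aux_conv r (1-γ) (-(t*(1+s))) (t*(1-s)) ((f x + B)/(2*B)) hr0 (by linarith)
      (by nlinarith) (div_nonneg (by linarith) (by linarith))
      (by rw [div_le_one (by linarith)]; linarith) hpos
    rw [neg_neg] at this
    refine le_trans (le_of_eq ?_) this
    congr 5
    rw [hms, htd]
    field_simp
    ring
  have hi2 : Integrable (fun x => ((f x + B)/(2*B)) * u + (1 - (f x + B)/(2*B)) * v) π := by
    fun_prop
  have hle := integral_mono hint hi2 hpt
  have he : ∫ x, (((f x + B)/(2*B)) * u + (1 - (f x + B)/(2*B)) * v) ∂π =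
      (1+s)/2 * u + (1-s)/2*v := by
    have : (fun x => ((f x + B)/(2*B)) * u + (1 - (f x + B)/(2*B)) * v) =
      fun x => f x * ((u - v)/(2*B)) + ((u+v)/2) := by
      funext x; field_simp; ring
    rw [this, integral_add (by fun_prop) (by fun_prop), integral_mul_const, ← hm, hms]
    simp
    field_simp
    ring
  rw [he] at hle
  have hle2 := mul_le_mul_of_nonneg_left hle hγ0.le
  refine hle2.trans (le_trans (le_of_eq ?_) h2p)
  rw [hu, hv]; ring

lemma aux_quad {X : Type*} [MeasurableSpace X] (π : Measure X) [IsProbabilityMeasure π]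
    (f : X → ℝ) (hf : Measurable f) (B : ℝ) (hB : 0 < B) (hfB : ∀ x, |f x| ≤ B)
    (θ γ : ℝ) (hθ : 0 < θ) (hθγ : θ * B ≤ γ) (hγ : γ ≤ 1) (g : X → ℝ) (hg : Measurable g)
    (C : ℝ) (hC : ∀ x, |g x| ≤ C) 
    (hint : Integrable (fun x => (g x)^2 / Real.exp (θ * (f x - ∫ x, f x ∂π))) π) :
    γ * (∫ x, g x ∂π)^2 + (1-γ) * ∫ x, (g x)^2 ∂π ≤
      Real.exp ((θ*B)^2/γ) * ∫ x, (g x)^2 / Real.exp (θ * (f x - ∫ x, f x ∂π)) ∂π := by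
  obtain ⟨h1, h2, h3⟩ := aux_int_inv π f hf B hB hfB θ γ hθ hθγ hγ
  obtain ⟨m, hm⟩ : ∃ m, m = ∫ x, f x ∂π := ⟨_, rfl⟩
  rw [← hm] at h2 h3 hint ⊢
  simp only [← hm] at h1
  have hγ0 : 0 < γ := lt_of_lt_of_le (by positivity) hθγ
  set r := Real.exp ((θ*B)^2/γ)
  obtain ⟨G, hG⟩ : ∃ G, G = ∫ x, g x ∂π := ⟨_, rfl⟩
  rw [← hG]
  have gi : Integrable g π := aux_bint hg C hC
  have g2i : Integrable (fun x => (g x)^2) π := by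
    refine aux_bint (by fun_prop) (C^2) fun x => ?_
    rw [abs_pow]; gcongr; exact hC x
  have hpt : ∀ x, (2*(γ*G)) * g x ≤ (r * ((g x)^2 / Real.exp (θ * (f x - m))) - (1-γ) * (g x)^2)
      + (γ*G)^2 * (1 / (r * Real.exp (-(θ * (f x - m))) - (1-γ))) := by
    intro x
    have h := h1 x
    rw [Real.exp_neg] at h ⊢
    set D := r * (Real.exp (θ * (f x - m)))⁻¹ - (1-γ) with hD
    have hDp : 0 < D := by rw [hD]; linarith
    have e1 : r * ((g x)^2 / Real.exp (θ * (f x - m))) - (1-γ) * (g x)^2 = D * (g x)^2 := by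
      rw [hD]; ring
    rw [e1]
    have : D * (g x)^2 + (γ*G)^2 * (1/D) - (2*(γ*G)) * g x = (D * g x - γ*G)^2/D := by
      field_simp; ring
    have : 0 ≤ (D * g x - γ*G)^2/D := by positivity
    linarith
  have i1 : Integrable (fun x => r * ((g x)^2 / Real.exp (θ * (f x - m))) - (1-γ) * (g x)^2) π :=
    (hint.const_mul _).sub (g2i.const_mul _)
  have := integral_mono (gi.const_mul _) (i1.add (h2.const_mul ((γ*G)^2))) hpt
  simp only [Pi.add_apply] at this
  rw [integral_add i1 (h2.const_mul _), integral_sub (hint.const_mul _) (g2i.const_mul _),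
    integral_const_mul, integral_const_mul, integral_const_mul, integral_const_mul, ← hG] at this
  have h4 := mul_le_mul_of_nonneg_left h3 (show 0 ≤ γ * G^2 by positivity)
  nlinarith

lemma aux_cs {X : Type*} [MeasurableSpace X] (π : Measure X)
    (p q : X → ℝ) (hp : Integrable (fun x => p x ^2) π) (hq : Integrable (fun x => q x ^2) π)
    (hpq : Integrable (fun x => p x * q x) π) :
    (∫ x, p x * q x ∂π)^2 ≤ (∫ x, p x ^2 ∂π) * ∫ x, q x ^2 ∂π := by
  have h : ∀ c : ℝ, 0 ≤ (∫ x, p x ^2 ∂π) * (c * c) + (2 * ∫ x, p x * q x ∂π) * c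
      + ∫ x, q x ^2 ∂π := by
    intro c
    have : 0 ≤ ∫ x, (c * p x + q x)^2 ∂π := integral_nonneg fun x => sq_nonneg _
    have e : (fun x => (c * p x + q x)^2) = fun x => (c*c) * p x ^2 + (2*c) * (p x * q x) + q x^2 := by
      funext x; ring
    have hi : Integrable (fun x => (c*c) * p x ^2 + (2*c) * (p x * q x)) π :=
      (hp.const_mul _).add (hpq.const_mul _)
    rw [e, integral_add hi hq,
      integral_add (hp.const_mul _) (hpq.const_mul _), integral_const_mul, integral_const_mul] at this
    linarith
  have := discrim_le_zero h
  rw [discrim] at this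
  nlinarith

lemma aux_alg (G1 G2 A D x : ℝ) (hA : 0 ≤ A) (hD : 0 ≤ D) (hx : x^2 ≤ A * D) :
    (G1*G2 + x)^2 ≤ (G1^2 + A) * (G2^2+D) := by
  have h : 2*(G1*G2)*x ≤ G1^2*D + G2^2*A := by
    apply le_of_sq_le_sq
    · have : (G1*G2)^2 * x^2 ≤ (G1*G2)^2 * (A*D) := by gcongr
      nlinarith [sq_nonneg (G1^2*D - G2^2*A)]
    · positivity
  nlinarith

lemma aux_meas {X : Type*} [MeasurableSpace X] (K : X → Measure X) 
    (hK : ∀ x, IsProbabilityMeasure (K x)) (hKmeas : Measurable K) (g : X → ℝ)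
    (hg : Measurable g) : Measurable (fun x => ∫ y, g y ∂(K x)) := by
  let κ : ProbabilityTheory.Kernel X X := ⟨K, hKmeas⟩
  have : ProbabilityTheory.IsMarkovKernel κ := ⟨hK⟩
  exact (MeasureTheory.StronglyMeasurable.integral_kernel (κ := κ) hg.stronglyMeasurable).measurable

lemma aux_bound {X : Type*} [MeasurableSpace X] (ν : Measure X) [IsProbabilityMeasure ν]
    (g : X → ℝ) (C : ℝ) (hC : ∀ x, |g x| ≤ C) : |∫ y, g y ∂ν| ≤ C := by
  have := norm_integral_le_of_norm_le_const (μ := ν) (f := g) (C := C)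
    (Filter.Eventually.of_forall hC)
  simpa using this

lemma aux_inv {X : Type*} [MeasurableSpace X] (K : X → Measure X) (π : Measure X)
    (hK : ∀ x, IsProbabilityMeasure (K x)) (hKmeas : Measurable K)
    [IsProbabilityMeasure π] (hrev : Reversible K π) (g : X → ℝ) (hg : Measurable g) 
    (C : ℝ) (hC : ∀ x, |g x| ≤ C) : ∫ x, ∫ y, g y ∂(K x) ∂π = ∫ x, g x ∂π := by
  have hb : π.bind K = π := by
    ext A hA
    rw [Measure.bind_apply hA hKmeas.aemeasurable]
    have := hrev Set.univ A MeasurableSet.univ hA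
    simpa using this
  let κ : ProbabilityTheory.Kernel X X := ⟨K, hKmeas⟩
  have : ProbabilityTheory.IsMarkovKernel κ := ⟨hK⟩
  have hi : Integrable g (π.bind κ) := by
    change Integrable g (π.bind K)
    rw [hb]; exact aux_bint hg C hC
  rw [Measure.comp_eq_comp_const_apply] at hi
  have h := ProbabilityTheory.Kernel.integral_comp hi
  rw [← Measure.comp_eq_comp_const_apply] at h
  change ∫ z, g z ∂(π.bind K) = _ at h
  rw [hb] at h
  rw [h]
  rfl

lemma aux_step {X : Type*} [MeasurableSpace X] (K : X → Measure X) (π : Measure X)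
    (hK : ∀ x, IsProbabilityMeasure (K x)) (hKmeas : Measurable K)
    [IsProbabilityMeasure π] (γ : ℝ) (hγ : γ ≤ 1)
    (hrev : Reversible K π) (hgap : HasAbsSpectralGap K π γ)
    (a : X → ℝ) (ha : Measurable a) (ha0 : ∀ x, 0 < a x) (Ca : ℝ) (hCa : ∀ x, |a x| ≤ Ca)
    (r : ℝ) (hQ : ∀ g : X → ℝ, Measurable g → (∃ C, ∀ x, |g x| ≤ C) → 
      γ * (∫ x, g x ∂π)^2 + (1-γ) * ∫ x, (g x)^2 ∂π ≤ r * ∫ x, (g x)^2 / a x ∂π)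
    (g : X → ℝ) (hg : Measurable g) (C : ℝ) (hC : ∀ x, |g x| ≤ C) :
    ∫ x, (a x * ∫ y, g y ∂(K x))^2 / a x ∂π ≤ r^2 * ∫ x, (g x)^2 / a x ∂π := by
  have hkm := aux_meas K hK hKmeas g hg
  have hkb : ∀ x, |∫ y, g y ∂(K x)| ≤ C := fun x => aux_bound (K x) g C hC
  have hkint := aux_inv K π hK hKmeas hrev g hg C hC
  have hg0 := hgap (fun x => g x - ∫ x, g x ∂π)
  have hgi : ∀ x, Integrable g (K x) := fun x => aux_bint hg C hC
  obtain ⟨k, hk⟩ : ∃ k : X → ℝ, k = fun x => ∫ y, g y ∂(K x) := ⟨_, rfl⟩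
  obtain ⟨G2, hG2⟩ : ∃ G2, G2 = ∫ x, g x ∂π := ⟨_, rfl⟩
  have e0 : ∀ x, ∫ y, (g y - G2) ∂(K x) = k x - G2 := by
    intro x; rw [integral_sub (hgi x) (by fun_prop), hk]; simp
  have hkx : ∀ x, ∫ y, g y ∂(K x) = k x := fun x => by rw [hk]
  simp only [hkx, ← hG2, e0] at hkm hkb hkint hg0 ⊢
  have hkm : Measurable k := hkm
  clear hk hkx e0
  have hC0 : 0 ≤ C := by
    have : Nonempty X := π.nonempty_of_neZero
    exact (abs_nonneg _).trans (hC (Classical.arbitrary X))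
  have hCa0 : 0 ≤ Ca := by
    have : Nonempty X := π.nonempty_of_neZero
    exact (abs_nonneg _).trans (hCa (Classical.arbitrary X))
  have gi : Integrable g π := aux_bint hg C hC
  have ki : Integrable k π := aux_bint hkm C hkb
  have sqi : ∀ (p : X → ℝ), Measurable p → ∀ D, (∀ x, |p x| ≤ D) → Integrable (fun x => p x ^2) π := by
    intro p hp D hD
    refine aux_bint (by fun_prop) (D^2) fun x => ?_
    rw [abs_pow]; gcongr; exact hD x
  have g2i := sqi g hg C hC
  have k2i := sqi k hkm C hkb
  have hgsub : ∀ x, |g x - G2| ≤ C + |G2| := fun x => (abs_sub _ _).trans (by linarith [hC x])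
  have hksub : ∀ x, |k x - G2| ≤ C + |G2| := fun x => (abs_sub _ _).trans (by linarith [hkb x])
  have hgap2 := hg0 (MemLp.of_bound (by fun_prop) (C + |G2|) (Filter.Eventually.of_forall hgsub))
    (by rw [integral_sub gi (by fun_prop), ← hG2]; simp)
  -- variances
  have var : ∀ (p : X → ℝ) (P : ℝ), Integrable p π → Integrable (fun x => p x ^2) π → 
      P = ∫ x, p x ∂π → ∫ x, (p x - P)^2 ∂π = ∫ x, p x ^2 ∂π - P^2 := by
    intro p P h1 h2 h3
    have : (fun x => (p x - P)^2) = fun x => p x ^2 - ((2*P) * p x - P^2) := by funext x; ring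
    rw [this, integral_sub h2 (by fun_prop), integral_sub (by fun_prop) (by fun_prop),
      integral_const_mul, ← h3]
    simp; ring
  have hg1m : Measurable (fun x => a x * k x) := by fun_prop
  have hg1b : ∀ x, |a x * k x| ≤ Ca * C := fun x => by
    rw [abs_mul]; exact mul_le_mul (hCa x) (hkb x) (abs_nonneg _) hCa0
  have g1i : Integrable (fun x => a x * k x) π := aux_bint hg1m _ hg1b
  have g12i := sqi _ hg1m _ hg1b
  have q1 := hQ _ hg1m ⟨_, hg1b⟩
  have q2 := hQ g hg ⟨C, hC⟩
  obtain ⟨G1, hG1⟩ : ∃ G1, G1 = ∫ x, a x * k x ∂π := ⟨_, rfl⟩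
  have v1 := var _ G1 g1i g12i hG1
  have v2 := var _ G2 gi g2i hG2
  have g1sub : ∀ x, |a x * k x - G1| ≤ Ca * C + |G1| :=
    fun x => (abs_sub _ _).trans (by linarith [hg1b x])
  have pi1 : Integrable (fun x => (a x * k x - G1) * (k x - G2)) π := by
    refine aux_bint (by fun_prop) ((Ca * C + |G1|) * (C + |G2|)) fun x => ?_
    rw [abs_mul]; exact mul_le_mul (g1sub x) (hksub x) (abs_nonneg _) (by positivity)
  have pi0 : Integrable (fun x => (a x * k x) * k x) π := by
    refine aux_bint (by fun_prop) ((Ca * C) * C) fun x => ?_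
    rw [abs_mul]; exact mul_le_mul (hg1b x) (hkb x) (abs_nonneg _) (by positivity)
  have cs := aux_cs π (fun x => a x * k x - G1) (fun x => k x - G2)
    (sqi _ (by fun_prop) _ g1sub) (sqi _ (by fun_prop) _ hksub) pi1
  have ex : ∫ x, (a x * k x) * k x ∂π = G1*G2 + ∫ x, (a x * k x - G1) * (k x - G2) ∂π := by
    have : (fun x => (a x * k x - G1) * (k x - G2)) = 
      fun x => (a x * k x) * k x - (G2 * (a x * k x) + (G1 * k x - G1*G2)) := by funext x; ring
    have j1 : Integrable (fun x => G1 * k x - G1*G2) π := (ki.const_mul _).sub (integrable_const _)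
    have j2 : Integrable (fun x => G2 * (a x * k x) + (G1 * k x - G1*G2)) π :=
      (g1i.const_mul _).add j1
    rw [this, integral_sub pi0 j2, integral_add (g1i.const_mul _) j1,
      integral_sub (ki.const_mul _) (integrable_const _),
      integral_const_mul, integral_const_mul, hkint, ← hG1]
    simp; ring
  have en : ∀ x, (a x * k x)^2 / a x = (a x * k x) * k x := by
    intro x; have := (ha0 x).ne'; field_simp
  simp only [en] at q1 ⊢
  rw [← hG1] at q1
  rw [← hG2] at q2
  set x := ∫ x, (a x * k x - G1) * (k x - G2) ∂π
  set N1 := ∫ x, (a x * k x) * k x ∂π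
  set N2 := ∫ x, (g x)^2 / a x ∂π
  have hN1 : 0 ≤ N1 := integral_nonneg fun x => by
    have := ha0 x
    have : a x * k x * k x = a x * (k x)^2 := by ring
    simp only [this, Pi.zero_apply]; positivity
  have hN2 : 0 ≤ N2 := integral_nonneg fun x => by
    have := ha0 x
    simp only [Pi.zero_apply]; positivity
  have hV1 : 0 ≤ ∫ x, (a x * k x - G1)^2 ∂π := integral_nonneg fun x => sq_nonneg _
  have hV2 : 0 ≤ ∫ x, (g x - G2)^2 ∂π := integral_nonneg fun x => sq_nonneg _
  set V1 := ∫ x, (a x * k x - G1)^2 ∂π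
  set V2 := ∫ x, (g x - G2)^2 ∂π
  have hl : 0 ≤ 1-γ := by linarith
  have hx : x^2 ≤ ((1-γ)*V1) * ((1-γ)*V2) := by
    have := mul_le_mul_of_nonneg_left hgap2 hV1
    nlinarith
  have alg := aux_alg G1 G2 _ _ x (mul_nonneg hl hV1) (mul_nonneg hl hV2) hx
  rw [← ex] at alg
  have f1 : G1^2 + (1-γ)*V1 ≤ r * N1 := by rw [v1]; linarith
  have f2 : G2^2 + (1-γ)*V2 ≤ r * N2 := by rw [v2]; linarith
  have f0 : 0 ≤ G1^2 + (1-γ)*V1 := by positivity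
  have f02 : 0 ≤ G2^2 + (1-γ)*V2 := by positivity
  have f3 : N1^2 ≤ (r*N1) * (r*N2) := alg.trans (mul_le_mul f1 f2 f02 (f0.trans f1))
  rcases hN1.eq_or_lt with h | h
  · rw [← h]; positivity
  · have : N1 * N1 ≤ (r^2*N2) * N1 := by nlinarith
    exact le_of_mul_le_mul_right this h

/-- real backward recursion -/
noncomputable def auxS {X : Type*} [MeasurableSpace X] (K : X → Measure X) (a : X → ℝ) : ℕ → X → ℝ
  | 0 => fun _ => 1
  | n + 1 => fun x => ∫ y, a y * auxS K a n y ∂(K x)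

lemma auxS_props {X : Type*} [MeasurableSpace X] (K : X → Measure X)
    (hK : ∀ x, IsProbabilityMeasure (K x)) (hKmeas : Measurable K)
    (a : X → ℝ) (ha : Measurable a) (ha0 : ∀ x, 0 < a x) (Ca : ℝ) (hCa0 : 0 ≤ Ca)
    (hCa : ∀ x, |a x| ≤ Ca) (n : ℕ) :
    Measurable (auxS K a n) ∧ (∀ x, 0 ≤ auxS K a n x) ∧ ∀ x, |auxS K a n x| ≤ Ca^n := by
  induction n with
  | zero => exact ⟨measurable_const, fun x => zero_le_one, fun x => by simp [auxS]⟩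
  | succ n ih =>
    obtain ⟨h1, h2, h3⟩ := ih
    refine ⟨aux_meas K hK hKmeas _ (ha.mul h1), fun x => ?_, fun x => ?_⟩
    · exact integral_nonneg fun y => mul_nonneg (ha0 y).le (h2 y)
    · refine aux_bound (K x) _ _ fun y => ?_
      rw [abs_mul, pow_succ']
      exact mul_le_mul (hCa y) (h3 y) (abs_nonneg _) hCa0

lemma auxS_bound {X : Type*} [MeasurableSpace X] (K : X → Measure X) (π : Measure X)
    (hK : ∀ x, IsProbabilityMeasure (K x)) (hKmeas : Measurable K)
    [IsProbabilityMeasure π] (γ : ℝ) (hγ : γ ≤ 1)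
    (hrev : Reversible K π) (hgap : HasAbsSpectralGap K π γ)
    (a : X → ℝ) (ha : Measurable a) (ha0 : ∀ x, 0 < a x) (Ca : ℝ) (hCa : ∀ x, |a x| ≤ Ca)
    (r : ℝ) (hr : 0 < r) (hQ : ∀ g : X → ℝ, Measurable g → (∃ C, ∀ x, |g x| ≤ C) →
      γ * (∫ x, g x ∂π)^2 + (1-γ) * ∫ x, (g x)^2 ∂π ≤ r * ∫ x, (g x)^2 / a x ∂π) (n : ℕ) :
    ∫ x, a x * auxS K a n x ∂π ≤ r^(n+1) := by
  have hCa0 : 0 ≤ Ca := by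
    have : Nonempty X := π.nonempty_of_neZero
    exact (abs_nonneg _).trans (hCa (Classical.arbitrary X))
  have hp := auxS_props K hK hKmeas a ha ha0 Ca hCa0 hCa
  have hb : ∀ n x, |a x * auxS K a n x| ≤ Ca * Ca^n := fun n x => by
    rw [abs_mul]; exact mul_le_mul (hCa x) ((hp n).2.2 x) (abs_nonneg _) hCa0
  have hm : ∀ n, Measurable (fun x => a x * auxS K a n x) := fun n => ha.mul (hp n).1
  have hN : ∀ n, ∫ x, (a x * auxS K a n x)^2 / a x ∂π ≤ (r^n)^2 * ∫ x, a x ∂π := by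
    intro n
    induction n with
    | zero =>
      apply le_of_eq
      simp only [auxS, pow_zero, one_pow, one_mul, mul_one]
      congr 1; funext x
      have := (ha0 x).ne'; field_simp
    | succ n ih =>
      have := aux_step K π hK hKmeas γ hγ hrev hgap a ha ha0 Ca hCa r hQ _ (hm n) _ (hb n)
      refine this.trans ?_
      calc _ ≤ r^2 * ((r^n)^2 * ∫ x, a x ∂π) := by gcongr
        _ = _ := by ring
  have hJ : ∀ n, (∫ x, a x * auxS K a n x ∂π)^2 ≤ r * ((r^n)^2 * ∫ x, a x ∂π) := by
    intro n
    have h1 := hQ _ (hm n) ⟨_, hb n⟩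
    have i1 : Integrable (fun x => a x * auxS K a n x) π := aux_bint (hm n) _ (hb n)
    have i2 : Integrable (fun x => (a x * auxS K a n x)^2) π := by
      refine aux_bint ((hm n).pow_const 2) ((Ca * Ca^n)^2) fun x => ?_
      rw [abs_pow]; gcongr; exact hb n x
    have h2 := aux_cs π (fun x => a x * auxS K a n x) (fun _ => 1) i2 (by simp) (by simpa using i1)
    simp at h2
    have h3 := mul_le_mul_of_nonneg_left (hN n) hr.le
    have h4 := mul_le_mul_of_nonneg_left h2 (sub_nonneg.2 hγ)
    linarith
  have hA : 0 ≤ ∫ x, a x ∂π := integral_nonneg fun x => (ha0 x).le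
  have h0 := hJ 0
  simp only [auxS, pow_zero, one_pow, one_mul, mul_one] at h0
  have hAr : ∫ x, a x ∂π ≤ r := by
    rcases hA.eq_or_lt with h | h
    · rw [← h]; exact hr.le
    · nlinarith
  apply le_of_sq_le_sq _ (by positivity)
  refine (hJ n).trans ?_
  calc _ ≤ r * ((r^n)^2 * r) := by gcongr
    _ = _ := by ring

lemma aux_snoc_meas {X : Type*} [MeasurableSpace X] (n : ℕ) :
    Measurable (fun p : (Fin (n+1) → X) × X => (Fin.snoc p.1 p.2 : Fin (n+1+1) → X)) := by
  rw [measurable_pi_iff]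
  intro i
  refine Fin.lastCases ?_ (fun j => ?_) i
  · simp only [Fin.snoc_last]; exact measurable_snd
  · simp only [Fin.snoc_castSucc]; exact (measurable_pi_apply j).comp measurable_fst

lemma aux_kernel_meas {X : Type*} [MeasurableSpace X] (K : X → Measure X)
    (hK : ∀ x, IsProbabilityMeasure (K x)) (hKmeas : Measurable K) (n : ℕ) :
    Measurable (fun xs : Fin (n+1) → X =>
      (K (xs (Fin.last n))).map (Fin.snoc (α := fun _ : Fin (n+1+1) => X) xs)) := by
  let κ : ProbabilityTheory.Kernel (Fin (n+1) → X) X :=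
    ⟨fun xs => K (xs (Fin.last n)), hKmeas.comp (measurable_pi_apply _)⟩
  have : ProbabilityTheory.IsMarkovKernel κ := ⟨fun xs => hK _⟩
  refine Measure.measurable_of_measurable_coe _ fun s hs => ?_
  have hsn : ∀ xs : Fin (n+1) → X, Measurable (Fin.snoc (α := fun _ : Fin (n+1+1) => X) xs) := fun xs =>
    (aux_snoc_meas n).comp (measurable_prodMk_left (x := xs))
  simp_rw [fun xs => Measure.map_apply (μ := K (xs (Fin.last n))) (hsn xs) hs]
  exact ProbabilityTheory.Kernel.measurable_kernel_prodMk_left (κ := κ) (aux_snoc_meas n hs)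

lemma aux_chain {X : Type*} [MeasurableSpace X] (K : X → Measure X) (μ : Measure X)
    (hK : ∀ x, IsProbabilityMeasure (K x)) (hKmeas : Measurable K)
    (α : X → ENNReal) (hα : Measurable α) (n : ℕ) : ∀ (φ : X → ENNReal), Measurable φ →
    ∫⁻ xs, (∏ i, α (xs i)) * φ (xs (Fin.last n)) ∂(chainLaw K μ n) =
      ∫⁻ x, α x * ((fun (ψ : X → ENNReal) x => ∫⁻ y, α y * ψ y ∂(K x))^[n] φ) x ∂μ := by
  induction n with
  | zero =>
    intro φ hφ
    rw [chainLaw, lintegral_map (by fun_prop) (by fun_prop)]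
    simp
  | succ n ih =>
    intro φ hφ
    have hsn : ∀ xs : Fin (n+1) → X, Measurable (Fin.snoc (α := fun _ : Fin (n+1+1) => X) xs) := fun xs =>
      (aux_snoc_meas n).comp (measurable_prodMk_left (x := xs))
    have hF : Measurable (fun xs : Fin (n+1+1) → X => (∏ i, α (xs i)) * φ (xs (Fin.last (n+1)))) := by
      fun_prop
    rw [chainLaw, Measure.lintegral_bind (aux_kernel_meas K hK hKmeas n).aemeasurable
      hF.aemeasurable, Function.iterate_succ_apply, ← ih]
    · refine lintegral_congr fun xs => ?_
      rw [lintegral_map hF (hsn xs), ← lintegral_const_mul _ (by fun_prop)]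
      refine lintegral_congr fun y => ?_
      rw [Fin.prod_univ_castSucc]
      simp only [Fin.snoc_castSucc, Fin.snoc_last]
      rw [mul_assoc]
    · exact (Measure.measurable_lintegral (hα.mul hφ)).comp hKmeas

lemma auxS_ofReal {X : Type*} [MeasurableSpace X] (K : X → Measure X)
    (hK : ∀ x, IsProbabilityMeasure (K x)) (hKmeas : Measurable K)
    (a : X → ℝ) (ha : Measurable a) (ha0 : ∀ x, 0 < a x) (Ca : ℝ) (hCa0 : 0 ≤ Ca)
    (hCa : ∀ x, |a x| ≤ Ca) (n : ℕ) :
    ((fun (ψ : X → ENNReal) x => ∫⁻ y, ENNReal.ofReal (a y) * ψ y ∂(K x))^[n] (fun _ => 1)) =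
      fun x => ENNReal.ofReal (auxS K a n x) := by
  induction n with
  | zero => simp [auxS]
  | succ n ih =>
    obtain ⟨h1, h2, h3⟩ := auxS_props K hK hKmeas a ha ha0 Ca hCa0 hCa n
    rw [Function.iterate_succ_apply', ih]
    funext x
    rw [auxS, ofReal_integral_eq_lintegral_ofReal]
    · refine lintegral_congr fun y => ?_
      rw [ENNReal.ofReal_mul (ha0 y).le]
    · refine aux_bint (ha.mul h1) (Ca * Ca^n) fun y => ?_
      rw [abs_mul]; exact mul_le_mul (hCa y) (h3 y) (abs_nonneg _) hCa0
    · exact Filter.Eventually.of_forall fun y => mul_nonneg (ha0 y).le (h2 y)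

lemma aux_tail {X : Type*} [MeasurableSpace X] (K : X → Measure X) (π μt : Measure X)
    (hK : ∀ x, IsProbabilityMeasure (K x)) (hKmeas : Measurable K)
    [IsProbabilityMeasure π] [IsProbabilityMeasure μt]
    (γ : ℝ) (hγ : γ ∈ Set.Ioc (0 : ℝ) 1)
    (hrev : Reversible K π) (hgap : HasAbsSpectralGap K π γ)
    (W : ℝ) (hW : 1 ≤ W) (hwarm : IsWarm μt π W) (n : ℕ)
    (f : X → ℝ) (hfmeas : Measurable f) (B : ℝ) (hB : 0 < B) (hfB : ∀ x, |f x| ≤ B)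
    (ε : ℝ) (hε : 0 < ε) (hεB : ε ≤ 2*B) :
      (chainLaw K μt n)
          {xs | ε ≤ (((n : ℝ) + 1))⁻¹ * (∑ i, f (xs i)) - ∫ x, f x ∂π} ≤
        ENNReal.ofReal
          (W * Real.exp (-(((n : ℝ) + 1) * γ * ε ^ 2 / (4 * B ^ 2)))) := by
  obtain ⟨hγ0, hγ1⟩ := hγ
  obtain ⟨θ, hθ⟩ : ∃ θ, θ = γ * ε / (2*B^2) := ⟨_, rfl⟩
  have hθ0 : 0 < θ := by rw [hθ]; positivity
  have hθγ : θ * B ≤ γ := by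
    rw [hθ, div_mul_eq_mul_div, div_le_iff₀ (by positivity)]
    have := mul_le_mul_of_nonneg_left hεB (show 0 ≤ γ * B by positivity)
    linarith
  have hquad := aux_quad π f hfmeas B hB hfB θ γ hθ0 hθγ hγ1
  obtain ⟨m, hm⟩ : ∃ m, m = ∫ x, f x ∂π := ⟨_, rfl⟩
  have hmB : |m| ≤ B := by rw [hm]; exact aux_bound π f B hfB
  simp only [← hm] at hquad ⊢
  obtain ⟨a, hadef⟩ : ∃ a : X → ℝ, a = fun x => Real.exp (θ * (f x - m)) := ⟨_, rfl⟩
  have hax : ∀ x, Real.exp (θ * (f x - m)) = a x := fun x => by rw [hadef]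
  have ha : Measurable a := by rw [hadef]; fun_prop
  have ha0 : ∀ x, 0 < a x := fun x => by rw [← hax]; exact Real.exp_pos _
  have hfm : ∀ x, |f x - m| ≤ 2*B := fun x => (abs_sub _ _).trans (by linarith [hfB x])
  have hCa : ∀ x, |a x| ≤ Real.exp (θ*(2*B)) := fun x => by
    rw [abs_of_pos (ha0 x), ← hax, Real.exp_le_exp]
    exact mul_le_mul_of_nonneg_left (abs_le.1 (hfm x)).2 hθ0.le
  have hCa' : ∀ x, |(a x)⁻¹| ≤ Real.exp (θ*(2*B)) := fun x => by
    rw [abs_of_pos (inv_pos.2 (ha0 x)), ← hax, ← Real.exp_neg, Real.exp_le_exp, ← mul_neg]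
    exact mul_le_mul_of_nonneg_left (by linarith [(abs_le.1 (hfm x)).1]) hθ0.le
  simp only [hax] at hquad
  set r := Real.exp ((θ*B)^2/γ) with hr
  have hQ : ∀ g : X → ℝ, Measurable g → (∃ C, ∀ x, |g x| ≤ C) →
      γ * (∫ x, g x ∂π)^2 + (1-γ) * ∫ x, (g x)^2 ∂π ≤ r * ∫ x, (g x)^2 / a x ∂π := by
    rintro g hg ⟨C, hC⟩
    refine hquad g hg C hC ?_
    refine aux_bint (by fun_prop) (C^2 * Real.exp (θ*(2*B))) fun x => ?_
    rw [div_eq_mul_inv, abs_mul, abs_pow]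
    have := hC x
    have := hCa' x
    gcongr
  have hbd := auxS_bound K π hK hKmeas γ hγ1 hrev hgap a ha ha0 _ hCa r (Real.exp_pos _) hQ n
  have hprops := auxS_props K hK hKmeas a ha ha0 _ (Real.exp_pos _).le hCa n
  have hint : Integrable (fun x => a x * auxS K a n x) π := by
    refine aux_bint (ha.mul hprops.1) (Real.exp (θ*(2*B)) * (Real.exp (θ*(2*B)))^n) fun x => ?_
    rw [abs_mul]
    exact mul_le_mul (hCa x) (hprops.2.2 x) (abs_nonneg _) (Real.exp_pos _).le
  have hmu : μt ≤ ENNReal.ofReal W • π := Measure.le_iff.2 fun A hA => by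
    simpa using hwarm A hA
  have hch := aux_chain K μt hK hKmeas (fun x => ENNReal.ofReal (a x)) (by fun_prop) n
    (fun _ => 1) measurable_const
  rw [auxS_ofReal K hK hKmeas a ha ha0 _ (Real.exp_pos _).le hCa n] at hch
  have hmgf : ∫⁻ xs, (∏ i, ENNReal.ofReal (a (xs i))) * 1 ∂(chainLaw K μt n) ≤
      ENNReal.ofReal (W * r^(n+1)) := by
    rw [hch]
    calc _ ≤ ∫⁻ x, ENNReal.ofReal (a x) * ENNReal.ofReal (auxS K a n x) ∂(ENNReal.ofReal W • π) :=
          lintegral_mono' hmu le_rfl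
      _ = ENNReal.ofReal W * ∫⁻ x, ENNReal.ofReal (a x * auxS K a n x) ∂π := by
          rw [lintegral_smul_measure, smul_eq_mul]
          congr 2; funext x; rw [ENNReal.ofReal_mul (ha0 x).le]
      _ = ENNReal.ofReal W * ENNReal.ofReal (∫ x, a x * auxS K a n x ∂π) := by
          rw [ofReal_integral_eq_lintegral_ofReal hint]
          exact Filter.Eventually.of_forall fun y => mul_nonneg (ha0 y).le (hprops.2.1 y)
      _ ≤ ENNReal.ofReal W * ENNReal.ofReal (r^(n+1)) := by gcongr
      _ = _ := by rw [ENNReal.ofReal_mul (by linarith)]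
  have hn : (0:ℝ) < (n:ℝ)+1 := by positivity
  obtain ⟨c, hc⟩ : ∃ c, c = Real.exp (θ * (((n:ℝ)+1) * ε)) := ⟨_, rfl⟩
  have hc0 : 0 < c := by rw [hc]; exact Real.exp_pos _
  have hsub : {xs : Fin (n+1) → X | ε ≤ (((n : ℝ) + 1))⁻¹ * (∑ i, f (xs i)) - m} ⊆
      {xs | ENNReal.ofReal c ≤ (∏ i, ENNReal.ofReal (a (xs i))) * 1} := by
    intro xs hxs
    simp only [Set.mem_ofPred_eq] at hxs ⊢
    rw [mul_one, ← ENNReal.ofReal_prod_of_nonneg (fun i _ => (ha0 _).le)]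
    apply ENNReal.ofReal_le_ofReal
    simp only [← hax]
    rw [← Real.exp_sum, hc, Real.exp_le_exp, ← Finset.mul_sum, Finset.sum_sub_distrib]
    refine mul_le_mul_of_nonneg_left ?_ hθ0.le
    have := mul_le_mul_of_nonneg_left hxs hn.le
    rw [mul_sub, mul_inv_cancel_left₀ hn.ne'] at this
    simpa using this
  have hmk := mul_meas_ge_le_lintegral (μ := chainLaw K μt n)
    (f := fun xs => (∏ i, ENNReal.ofReal (a (xs i))) * 1) (by fun_prop) (ENNReal.ofReal c)
  have hfin : ENNReal.ofReal c * (chainLaw K μt n)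
      {xs | ε ≤ (((n : ℝ) + 1))⁻¹ * (∑ i, f (xs i)) - m} ≤ ENNReal.ofReal (W * r^(n+1)) :=
    (mul_le_mul_right (measure_mono hsub) _).trans (hmk.trans hmgf)
  have hfin2 : (chainLaw K μt n)
      {xs | ε ≤ (((n : ℝ) + 1))⁻¹ * (∑ i, f (xs i)) - m} ≤
        ENNReal.ofReal (W * r^(n+1)) / ENNReal.ofReal c := by
    rw [ENNReal.le_div_iff_mul_le (Or.inl (by simpa using hc0)) (Or.inl ENNReal.ofReal_ne_top),
      mul_comm]
    exact hfin
  refine hfin2.trans (le_of_eq ?_)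
  rw [← ENNReal.ofReal_div_of_pos hc0]
  congr 1
  rw [mul_div_assoc, hr, hc, ← Real.exp_nat_mul, ← Real.exp_sub]
  congr 2
  rw [hθ]
  push_cast
  field_simp
  ring

theorem stmt16 {X : Type*} [MeasurableSpace X] (K : X → Measure X) (π μt : Measure X)
    (hK : ∀ x, IsProbabilityMeasure (K x)) (hKmeas : Measurable K)
    [IsProbabilityMeasure π] [IsProbabilityMeasure μt]
    (γ : ℝ) (hγ : γ ∈ Set.Ioc (0 : ℝ) 1)
    (hrev : Reversible K π) (hgap : HasAbsSpectralGap K π γ)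
    (W : ℝ) (hW : 1 ≤ W) (hwarm : IsWarm μt π W)
    (n : ℕ) -- the chain has length `P = n + 1 ≥ 1`
    (f : X → ℝ) (hfmeas : Measurable f) (B : ℝ) (hB : 0 < B) (hfB : ∀ x, |f x| ≤ B) :
    ∀ ε : ℝ, 0 < ε →
      (chainLaw K μt n)
          {xs | ε ≤ |(((n : ℝ) + 1))⁻¹ * (∑ i, f (xs i)) - ∫ x, f x ∂π|} ≤
        ENNReal.ofReal
          (2 * W * Real.exp (-(((n : ℝ) + 1) * γ * ε ^ 2 / (4 * B ^ 2)))) := by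
  intro ε hε
  have hmB : |∫ x, f x ∂π| ≤ B := aux_bound π f B hfB
  rcases le_or_gt ε (2*B) with h | h
  · have t1 := aux_tail K π μt hK hKmeas γ hγ hrev hgap W hW hwarm n f hfmeas B hB hfB ε hε h
    have t2 := aux_tail K π μt hK hKmeas γ hγ hrev hgap W hW hwarm n (fun x => - f x) hfmeas.neg B hB
      (fun x => by rw [abs_neg]; exact hfB x) ε hε h
    set E := Real.exp (-(((n : ℝ) + 1) * γ * ε ^ 2 / (4 * B ^ 2)))
    have hE : 0 ≤ W * E := mul_nonneg (by linarith) (Real.exp_pos _).le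
    rw [show 2 * W * E = W * E + W * E by ring, ENNReal.ofReal_add hE hE]
    refine le_trans (measure_mono ?_) ((measure_union_le _ _).trans (add_le_add t1 t2))
    intro xs hxs
    simp only [Set.mem_ofPred_eq, Set.mem_union] at hxs ⊢
    rw [integral_neg, Finset.sum_neg_distrib]
    rcases le_abs.1 hxs with h' | h'
    · exact Or.inl h'
    · right; linarith
  · have hemp : {xs : Fin (n+1) → X | ε ≤ |(((n : ℝ) + 1))⁻¹ * (∑ i, f (xs i)) - ∫ x, f x ∂π|} = ∅ := by
      ext xs
      simp only [Set.mem_ofPred_eq, Set.mem_empty_iff_false, iff_false, not_le]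
      refine lt_of_le_of_lt ?_ h
      refine (abs_sub _ _).trans ?_
      have hn : (0:ℝ) < (n:ℝ)+1 := by positivity
      have hs : |∑ i, f (xs i)| ≤ ((n:ℝ)+1) * B := by
        refine (Finset.abs_sum_le_sum_abs _ _).trans ?_
        refine (Finset.sum_le_sum (fun i _ => hfB (xs i))).trans ?_
        simp
      have : |(((n : ℝ) + 1))⁻¹ * (∑ i, f (xs i))| ≤ B := by
        rw [abs_mul, abs_of_pos (inv_pos.2 hn), inv_mul_le_iff₀ hn]
        exact hs
      linarith
    rw [hemp]
    simp
end
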